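/- Cosystolic norm of the Paley cochain: Let p be an odd prime and let k be an integer with 1 ≤ k < p. Let χ be the Legendre symbol modulo p (χ(x) = 1 if x is a nonzero quadratic residue mod p, χ(x) = −1 if x is a quadratic non-residue, χ(0) = 0). Define the Paley k-cochain φ_k on the full simplex Δ on the vertex set F_p by φ_k({x_0, …, x_k}) = 1 if χ(x_0 + ⋯ + x_k) = 1 and φ_k({x_0, …, x_k}) = 0 otherwise, for every (k+1)-element subset {x_0, …, x_k} of F_p. Then ‖φ_k‖_csy ≥ ((p−1)/(2p)) · C(p, k+1) − (2^{k+1}/(k+1)!) · p^{k+1−2^{−k}}, where C(p, k+1) is the binomial coefficient and p^{k+1−2^{−k}} denotes the real power of p with exponent k + 1 − 2^{−k}. -/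

import Mathlib

open Finset

section Simplicial

variable {V : Type*} [DecidableEq V]

/-- `X` is a finite abstract simplicial complex: a finite family of nonempty finite sets
closed under taking nonempty subsets. -/
def IsComplex (X : Finset (Finset V)) : Prop :=
  (∀ σ ∈ X, σ.Nonempty) ∧ ∀ σ ∈ X, ∀ τ ⊆ σ, τ.Nonempty → τ ∈ X

/-- The `k`-dimensional faces of `X` (faces of cardinality `k+1`). -/
def faces (X : Finset (Finset V)) (k : ℕ) : Finset (Finset V) :=
  X.filter fun σ => σ.card = k + 1

/-- The support of a `k`-cochain. -/
def csupp (X : Finset (Finset V)) (k : ℕ) (φ : Finset V → ZMod 2) : Finset (Finset V) :=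
  (faces X k).filter fun σ => φ σ ≠ 0

/-- The norm of a `k`-cochain. -/
def cnorm (X : Finset (Finset V)) (k : ℕ) (φ : Finset V → ZMod 2) : ℕ :=
  (csupp X k φ).card

/-- The coboundary of a `k`-cochain, as a `(k+1)`-cochain. -/
def cob (X : Finset (Finset V)) (k : ℕ) (φ : Finset V → ZMod 2) : Finset V → ZMod 2 :=
  fun τ => ∑ σ ∈ (faces X k).filter (fun σ => σ ⊆ τ), φ σ

/-- The cosystolic norm of a `k`-cochain, with the reduced convention at `k = 0`. -/
noncomputable def cosys (X : Finset (Finset V)) (k : ℕ) (φ : Finset V → ZMod 2) : ℕ :=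
  if k = 0 then
    min (cnorm X 0 φ) (cnorm X 0 fun σ => 1 + φ σ)
  else
    sInf {m | ∃ ψ : Finset V → ZMod 2, m = cnorm X k fun τ => φ τ + cob X (k - 1) ψ τ}

/-- The `k`-th (coboundary) Cheeger constant, valued in `ℝ≥0∞` (`⊤` if no cochain has
positive cosystolic norm). -/
noncomputable def cheeger (X : Finset (Finset V)) (k : ℕ) : ENNReal :=
  sInf {r : ENNReal | ∃ φ : Finset V → ZMod 2, 0 < cosys X k φ ∧
    r = (cnorm X (k + 1) (cob X k φ) : ENNReal) / (cosys X k φ : ENNReal)}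

/-- The boundary of a `k`-chain, as a `(k-1)`-chain. -/
def bdry (X : Finset (Finset V)) (k : ℕ) (c : Finset V → ZMod 2) : Finset V → ZMod 2 :=
  fun τ => ∑ σ ∈ (faces X k).filter (fun σ => τ ⊆ σ), c σ

/-- A `k`-cycle, with the reduced convention at `k = 0`. -/
def IsCycle (X : Finset (Finset V)) (k : ℕ) (c : Finset V → ZMod 2) : Prop :=
  if k = 0 then ∑ σ ∈ faces X 0, c σ = 0
  else ∀ τ ∈ faces X (k - 1), bdry X k c τ = 0

/-- Evaluation of a `k`-cochain on a `k`-chain. -/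
def eval (X : Finset (Finset V)) (k : ℕ) (φ c : Finset V → ZMod 2) : ZMod 2 :=
  ∑ σ ∈ faces X k, φ σ * c σ

end Simplicial

section CharacterSums

open Polynomial

theorem eq_zero_of_X_pow_dvd_add_mul_pow {K : Type*} [Field K] {p : ℕ} [Fact p.Prime] [CharP K p]
    (hp : Odd p) {c A : ℕ} {F r s : K[X]} (hF : Squarefree F) (hD : 0 < F.natDegree)
    (hF0 : F.coeff 0 ≠ 0) (hA : 2 * A + F.natDegree ≤ p ^ c) (hr : r.degree < A)
    (hs : s.degree < A) (h : X ^ p ^ c ∣ r + s * F ^ ((p ^ c - 1) / 2)) : r = 0 ∧ s = 0 := by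
  have hM : (p ^ c - 1) / 2 * 2 + 1 = p ^ c := by
    obtain ⟨t, ht⟩ := hp.pow (n := c)
    omega
  set M := p ^ c with hMdef
  set G := F ^ ((M - 1) / 2) with hG
  have hG2 : G ^ 2 * F = F ^ M := by
    rw [hG, ← pow_mul, ← pow_succ, hM]
  have h1 : X ^ M ∣ F ^ M - C (F.coeff 0 ^ M) := by
    rw [C_pow, hMdef, ← sub_pow_char_pow]
    exact pow_dvd_pow_of_dvd (X_dvd_iff.2 (by simp)) _
  have h2 : X ^ M ∣ r ^ 2 * F - C (F.coeff 0 ^ M) * s ^ 2 := by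
    have e : r ^ 2 * F - C (F.coeff 0 ^ M) * s ^ 2
        = (r + s * G) * ((r - s * G) * F) + s ^ 2 * (F ^ M - C (F.coeff 0 ^ M)) := by
      rw [← hG2]; ring
    rw [e]
    exact dvd_add (h.mul_right _) (h1.mul_left _)
  have hF1 : F ≠ 0 := by rintro rfl; simp at hD
  have hdeg : (r ^ 2 * F - C (F.coeff 0 ^ M) * s ^ 2).degree < M := by
    have key : ∀ u : K[X], u.degree < A → ∀ v : K[X], v.natDegree ≤ F.natDegree →
        (u ^ 2 * v).degree < M := by
      intro u hu v hv
      by_cases hu0 : u = 0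
      · subst hu0
        simp
      have h3 : u.natDegree < A := (natDegree_lt_iff_degree_lt hu0).2 hu
      refine lt_of_le_of_lt degree_le_natDegree ?_
      have h4 : (u ^ 2 * v).natDegree ≤ 2 * u.natDegree + v.natDegree :=
        natDegree_mul_le.trans (by gcongr; exact natDegree_pow_le)
      exact_mod_cast (by omega : (u ^ 2 * v).natDegree < M)
    refine lt_of_le_of_lt (degree_sub_le _ _) (max_lt (key r hr F le_rfl) ?_)
    rw [mul_comm]
    exact key s hs _ (by simp)
  have h3 : r ^ 2 * F = C (F.coeff 0 ^ M) * s ^ 2 :=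
    sub_eq_zero.1 (eq_zero_of_dvd_of_degree_lt h2 (by simpa using hdeg))
  have hc : IsUnit (C (F.coeff 0 ^ M)) := isUnit_C.2 (pow_ne_zero _ hF0).isUnit
  have hr0 : r = 0 := by
    by_contra hr0
    have h4 : r ^ 2 ∣ s ^ 2 := (hc.dvd_mul_left).1 ⟨F, h3.symm⟩
    have h5 : r ∣ s := (IsIntegrallyClosed.pow_dvd_pow_iff two_ne_zero).1 h4
    obtain ⟨t, rfl⟩ := h5
    have h6 : F = C (F.coeff 0 ^ M) * t ^ 2 :=
      mul_left_cancel₀ (pow_ne_zero 2 hr0) (by rw [h3]; ring)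
    have h7 : IsUnit t := hF t ⟨C (F.coeff 0 ^ M), by rw [← sq, mul_comm]; exact h6⟩
    have h8 : IsUnit F := by rw [h6]; exact hc.mul (h7.pow 2)
    exact hD.ne' (natDegree_eq_zero_of_isUnit h8)
  refine ⟨hr0, ?_⟩
  rw [hr0] at h3
  have h9 : C (F.coeff 0 ^ M) * s ^ 2 = 0 := by rw [← h3]; ring
  simpa [hF0] using h9

theorem exists_frobenius_relation {K : Type*} [Field K] (F : K[X]) (ε : K) {A J θ ℓ : ℕ}
    (h : θ * F.natDegree + ℓ * A + J < 2 * (J * A)) :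
    ∃ r s : Fin J → K[X], (∀ j, (r j).degree < A) ∧ (∀ j, (s j).degree < A) ∧
      ¬ (∀ j, r j = 0 ∧ s j = 0) ∧
      ∑ j : Fin J, (F ^ θ * expand K ℓ (r j) + C ε * expand K ℓ (s j)) * X ^ (j : ℕ) = 0 := by
  set T := θ * F.natDegree + ℓ * A + J with hT
  let Φ : ((Fin J → degreeLT K A) × (Fin J → degreeLT K A)) →ₗ[K] K[X] :=
    { toFun := fun v => ∑ j : Fin J, (F ^ θ * expand K ℓ (v.1 j : K[X])
        + C ε * expand K ℓ (v.2 j : K[X])) * X ^ (j : ℕ)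
      map_add' := by
        intro v w
        rw [← Finset.sum_add_distrib]
        refine Finset.sum_congr rfl fun j _ => ?_
        simp only [Prod.fst_add, Prod.snd_add, Pi.add_apply, Submodule.coe_add, map_add]
        ring
      map_smul' := by
        intro c v
        rw [Finset.smul_sum]
        refine Finset.sum_congr rfl fun j _ => ?_
        simp only [Prod.smul_fst, Prod.smul_snd, Pi.smul_apply, Submodule.coe_smul, map_smul,
          RingHom.id_apply]
        simp only [smul_eq_C_mul]
        ring }
  have hnd : ∀ u : degreeLT K A, (expand K ℓ (u : K[X])).natDegree ≤ ℓ * A := by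
    intro u
    rw [natDegree_expand, mul_comm]
    refine Nat.mul_le_mul_left _ ?_
    exact natDegree_le_of_degree_le (mem_degreeLT.1 u.2).le
  have hΦ : ∀ v, Φ v ∈ degreeLT K T := by
    intro v
    change ∑ j : Fin J, _ ∈ _
    refine Submodule.sum_mem _ fun j _ => mem_degreeLT.2 ?_
    refine lt_of_le_of_lt degree_le_natDegree ?_
    have h1 : (F ^ θ * expand K ℓ (v.1 j : K[X])).natDegree ≤ θ * F.natDegree + ℓ * A :=
      natDegree_mul_le.trans (add_le_add natDegree_pow_le (hnd _))
    have h2 : (C ε * expand K ℓ (v.2 j : K[X])).natDegree ≤ θ * F.natDegree + ℓ * A :=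
      (natDegree_C_mul_le _ _).trans ((hnd _).trans (Nat.le_add_left _ _))
    have h3 := natDegree_mul_le (p := F ^ θ * expand K ℓ (v.1 j : K[X])
      + C ε * expand K ℓ (v.2 j : K[X])) (q := X ^ (j : ℕ))
    rw [natDegree_X_pow] at h3
    have h4 := natDegree_add_le_of_degree_le h1 h2
    have h5 := j.2
    exact_mod_cast (by omega : _ < T)
  have hfin : ∀ n, FiniteDimensional K (degreeLT K n) := fun n =>
    (degreeLTEquiv K n).symm.finiteDimensional
  have hrank : ∀ n, Module.finrank K (degreeLT K n) = n := fun n => by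
    rw [(degreeLTEquiv K n).finrank_eq]; simp
  have := hfin A
  have := hfin T
  have hker := LinearMap.ker_ne_bot_of_finrank_lt (f := Φ.codRestrict _ hΦ) (by
    rw [hrank, Module.finrank_prod, Module.finrank_pi_fintype]
    simp only [hrank, sum_const, card_univ, Fintype.card_fin, smul_eq_mul]
    omega)
  obtain ⟨v, hv, hv0⟩ := Submodule.exists_mem_ne_zero_of_ne_bot hker
  refine ⟨fun j => v.1 j, fun j => v.2 j, fun j => mem_degreeLT.1 (v.1 j).2,
    fun j => mem_degreeLT.1 (v.2 j).2, fun h0 => hv0 ?_, ?_⟩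
  · ext j : 3
    · simpa using (h0 j).1
    · simpa using (h0 j).2
  · have := congrArg Subtype.val (LinearMap.mem_ker.1 hv)
    simpa [Φ] using this

theorem eval_map_iterateFrobeniusEquiv_symm_pow {K : Type*} [Field K] (p : ℕ) [Fact p.Prime]
    [CharP K p] [PerfectRing K p] (b : ℕ) (r : K[X]) (x : K) :
    ((r.map ((iterateFrobeniusEquiv K p b).symm : K →+* K)).eval x) ^ p ^ b
      = (expand K (p ^ b) r).eval x := by
  rw [← eval_pow, ← map_iterateFrobenius_expand p, ← map_expand, Polynomial.map_map]
  have : (iterateFrobenius K p b).comp ((iterateFrobeniusEquiv K p b).symm : K →+* K)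
      = RingHom.id K := by
    ext y
    have := (iterateFrobeniusEquiv K p b).apply_symm_apply y
    rwa [iterateFrobeniusEquiv_apply] at this
  rw [this, Polynomial.map_id]

theorem two_mul_card_pow_eq_le {K : Type*} [Field K] [Fintype K] [DecidableEq K] {p : ℕ}
    [Fact p.Prime] [CharP K p] (hp : Odd p) {b c : ℕ} (hK : Fintype.card K = p ^ b * p ^ c)
    (hbc : b ≤ c) {F : K[X]} (hF : Squarefree F) (hD : 0 < F.natDegree)
    (hF0 : F.coeff 0 ≠ 0) (hM : 4 * F.natDegree + 8 < p ^ c) {ε : K} (hε : ε ≠ 0) :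
    2 * #{x : K | F.eval x ^ (Fintype.card K / 2) = ε}
      ≤ Fintype.card K + p ^ c * (3 * F.natDegree + 4) := by
  set D := F.natDegree with hDdef
  have hpos : 0 < p := (Fact.out : p.Prime).pos
  have hlM : p ^ b ≤ p ^ c := Nat.pow_le_pow_right hpos hbc
  obtain ⟨θ, hθ⟩ := hp.pow (n := b)
  obtain ⟨η, hη⟩ := hp.pow (n := c)
  set ℓ := p ^ b with hℓ
  set M := p ^ c with hMdef
  have hη' : (M - 1) / 2 = η := by omega
  set A := (M - D) / 2 with hA
  set J := θ + D + 2 with hJ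
  have hA1 : M ≤ 4 * A := by omega
  have hcount : θ * D + ℓ * A + J < 2 * (J * A) := by
    have : θ * (D + 1) ≤ (2 * A) * (D + 1) := Nat.mul_le_mul_right _ (by omega)
    rw [hJ, hθ]
    nlinarith
  obtain ⟨r, s, hr, hs, hne, hrel⟩ := exists_frobenius_relation F ε hcount
  set σ : K →+* K := ((iterateFrobeniusEquiv K p b).symm : K →+* K) with hσ
  have hσinj : Function.Injective σ := (iterateFrobeniusEquiv K p b).symm.injective
  set u : Fin J → K[X] := fun j => (r j).map σ + (s j).map σ * F ^ η with hu
  set R : K[X] := ∑ j : Fin J, u j * X ^ (M * j) with hR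
  have hudvd : ∀ j, X ^ M ∣ u j → r j = 0 ∧ s j = 0 := by
    intro j hj
    have := eq_zero_of_X_pow_dvd_add_mul_pow hp (c := c) (A := A) (r := (r j).map σ)
      (s := (s j).map σ) hF hD hF0 (by omega) (by rw [degree_map]; exact hr j)
      (by rw [degree_map]; exact hs j) (by rw [← hMdef, hη']; exact hj)
    exact ⟨(Polynomial.map_eq_zero σ).1 this.1, (Polynomial.map_eq_zero σ).1 this.2⟩
  have hR0 : R ≠ 0 := by
    intro hR0
    apply hne
    intro j
    induction j using WellFoundedLT.induction with
    | ind j ih =>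
      apply hudvd
      have h1 : X ^ (M * (j + 1)) ∣ u j * X ^ (M * j) := by
        have h2 : u j * X ^ (M * (j : ℕ)) = - ∑ i ∈ univ.erase j, u i * X ^ (M * (i : ℕ)) := by
          rw [eq_neg_iff_add_eq_zero,
            Finset.add_sum_erase _ (fun i : Fin J => u i * X ^ (M * (i : ℕ))) (mem_univ j)]
          exact hR0
        rw [h2, dvd_neg]
        refine Finset.dvd_sum fun i hi => ?_
        rcases lt_or_gt_of_ne (Finset.ne_of_mem_erase hi) with hlt | hgt
        · simp [hu, (ih i hlt).1, (ih i hlt).2]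
        · refine Dvd.dvd.mul_left (pow_dvd_pow _ (Nat.mul_le_mul_left _ ?_)) _
          exact hgt
      rw [mul_add, mul_one, add_comm, pow_add] at h1
      exact (mul_dvd_mul_iff_right (pow_ne_zero _ X_ne_zero)).1 h1
  have hQ : Fintype.card K / 2 = θ + η * ℓ := by
    rw [hK, hη, hθ]
    have : (2 * θ + 1) * (2 * η + 1) = 2 * (θ + η * (2 * θ + 1)) + 1 := by ring
    omega
  have hroot : ∀ x : K, F.eval x ^ (Fintype.card K / 2) = ε → R.IsRoot x := by
    intro x hx
    have hFx : F.eval x ≠ 0 := by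
      intro h0
      rw [h0, zero_pow] at hx
      · exact hε hx.symm
      · rw [hK]
        have : 1 ≤ ℓ := Nat.one_le_pow _ _ hpos
        have : 2 ≤ ℓ * M := by nlinarith
        omega
    have h1 : F.eval x ^ θ * R.eval x ^ ℓ = 0 := by
      have h2 := congrArg (Polynomial.eval x) hrel
      rw [eval_zero, eval_finsetSum] at h2
      rw [hR, eval_finsetSum, hℓ, sum_pow_char_pow, Finset.mul_sum, ← h2]
      refine Finset.sum_congr rfl fun j _ => ?_
      have hxQ : x ^ (M * (j : ℕ) * ℓ) = x ^ (j : ℕ) := by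
        rw [show M * (j : ℕ) * ℓ = (ℓ * M) * j by ring, pow_mul, ← hK, FiniteField.pow_card]
      simp only [hu, eval_mul, eval_add, eval_pow, eval_X, eval_C]
      rw [mul_pow, add_pow_char_pow, mul_pow, hσ, eval_map_iterateFrobeniusEquiv_symm_pow,
        eval_map_iterateFrobeniusEquiv_symm_pow, ← hx, hQ, ← hℓ, ← pow_mul, ← pow_mul, hxQ]
      ring
    have h3 := (mul_eq_zero.1 h1).resolve_left (pow_ne_zero _ hFx)
    exact pow_eq_zero_iff (pow_pos hpos b).ne' |>.1 h3
  have hcard : #{x : K | F.eval x ^ (Fintype.card K / 2) = ε} ≤ R.natDegree := by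
    have hsub : ({x : K | F.eval x ^ (Fintype.card K / 2) = ε} : Finset K) ⊆ R.roots.toFinset := by
      intro x hx
      rw [Multiset.mem_toFinset, mem_roots hR0]
      exact hroot x (by simpa using hx)
    exact (Finset.card_le_card hsub).trans ((Multiset.toFinset_card_le _).trans (card_roots' _))
  have hdeg : R.natDegree ≤ A + η * D + M * J := by
    refine natDegree_sum_le_of_forall_le _ _ fun j _ => ?_
    have h1 : ((r j).map σ).natDegree ≤ A + η * D :=
      (natDegree_map_le).trans ((natDegree_le_of_degree_le (hr j).le).trans (Nat.le_add_right _ _))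
    have h2 : ((s j).map σ * F ^ η).natDegree ≤ A + η * D :=
      natDegree_mul_le.trans (add_le_add
        ((natDegree_map_le).trans (natDegree_le_of_degree_le (hs j).le)) natDegree_pow_le)
    refine natDegree_mul_le.trans (add_le_add (natDegree_add_le_of_degree_le h1 h2) ?_)
    rw [natDegree_X_pow]
    exact Nat.mul_le_mul_left _ j.2.le
  have h2A : 2 * A ≤ M := by omega
  have hfin : 2 * (A + η * D + M * J) ≤ Fintype.card K + M * (3 * D + 4) := by
    have e1 : 2 * (η * D) ≤ M * D := by nlinarith
    rw [hK, hJ, hθ]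
    nlinarith
  omega

theorem Polynomial.Separable.comp_of_derivative_eq_C {K : Type*} [Field K] {F g : K[X]}
    (hF : F.Separable) {u : K} (hu : u ≠ 0) (hg : derivative g = C u) : (F.comp g).Separable := by
  rw [separable_def, derivative_comp, hg]
  have h := IsCoprime.map hF (compRingHom g)
  simp only [coe_compRingHom_apply] at h
  exact (isCoprime_mul_unit_left_right (isUnit_C.2 hu.isUnit) _ _).2 h

theorem abs_sum_quadraticChar_eval_le_of_coeff_zero_ne {K : Type*} [Field K] [Fintype K]
    [DecidableEq K] {p : ℕ} [Fact p.Prime] [CharP K p] (hp : Odd p) {b c : ℕ}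
    (hK : Fintype.card K = p ^ b * p ^ c) (hbc : b ≤ c) {F : K[X]} (hF : F.Separable)
    (hD : 0 < F.natDegree) (hF0 : F.coeff 0 ≠ 0) (hM : 4 * F.natDegree + 8 < p ^ c) :
    |∑ x : K, quadraticChar K (F.eval x)| ≤ p ^ c * (3 * F.natDegree + 4) + F.natDegree := by
  have hchar : ringChar K ≠ 2 := by
    rw [ringChar.eq K p]
    rintro rfl
    exact absurd hp (by decide)
  have hFne : F ≠ 0 := by rintro rfl; simp at hD
  have hle : ∀ (ε : ℤ) (ε' : K), ε' ≠ 0 → (ε : K) = ε' →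
      2 * #{x : K | quadraticChar K (F.eval x) = ε}
        ≤ Fintype.card K + p ^ c * (3 * F.natDegree + 4) := by
    intro ε ε' hε' he
    refine le_trans (Nat.mul_le_mul_left 2 (Finset.card_le_card ?_))
      (two_mul_card_pow_eq_le hp hK hbc hF.squarefree hD hF0 hM hε')
    intro x hx
    simp only [mem_filter, mem_univ, true_and] at hx ⊢
    rw [← quadraticChar_eq_pow_of_char_ne_two' hchar, hx, he]
  have h1 := hle 1 1 one_ne_zero (by simp)
  have h2 := hle (-1) (-1) (by simp) (by simp)
  have h0 : #{x : K | F.eval x = 0} ≤ F.natDegree := by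
    have hsub : ({x : K | F.eval x = 0} : Finset K) ⊆ F.roots.toFinset := by
      intro x hx
      rw [Multiset.mem_toFinset, mem_roots hFne]
      simpa using hx
    exact (Finset.card_le_card hsub).trans ((Multiset.toFinset_card_le _).trans (card_roots' _))
  have hpt : ∀ x : K, quadraticChar K (F.eval x)
      = (if quadraticChar K (F.eval x) = 1 then (1 : ℤ) else 0)
        - (if quadraticChar K (F.eval x) = -1 then (1 : ℤ) else 0) := by
    intro x
    by_cases hx : F.eval x = 0
    · simp [hx]
    · rcases quadraticChar_dichotomy hx with h | h <;> rw [h] <;> norm_num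
  have hone : ∀ x : K, (1 : ℤ) = (if quadraticChar K (F.eval x) = 1 then (1 : ℤ) else 0)
        + (if quadraticChar K (F.eval x) = -1 then (1 : ℤ) else 0)
        + (if F.eval x = 0 then (1 : ℤ) else 0) := by
    intro x
    by_cases hx : F.eval x = 0
    · simp [hx]
    · rcases quadraticChar_dichotomy hx with h | h <;> rw [h] <;> simp [hx]
  have hsum : ∑ x : K, quadraticChar K (F.eval x)
      = (#{x : K | quadraticChar K (F.eval x) = 1} : ℤ)
        - #{x : K | quadraticChar K (F.eval x) = -1} := by
    rw [Finset.sum_congr rfl fun x _ => hpt x, Finset.sum_sub_distrib]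
    simp
  have htot : (Fintype.card K : ℤ) = (#{x : K | quadraticChar K (F.eval x) = 1} : ℤ)
        + #{x : K | quadraticChar K (F.eval x) = -1} + #{x : K | F.eval x = 0} := by
    have : (Fintype.card K : ℤ) = ∑ x : K, 1 := by simp
    rw [this, Finset.sum_congr rfl fun x _ => hone x, Finset.sum_add_distrib,
      Finset.sum_add_distrib]
    simp
  rw [hsum, abs_le]
  have h1' : (2 * #{x : K | quadraticChar K (F.eval x) = 1} : ℤ)
      ≤ Fintype.card K + p ^ c * (3 * F.natDegree + 4) := by exact_mod_cast h1
  have h2' : (2 * #{x : K | quadraticChar K (F.eval x) = -1} : ℤ)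
      ≤ Fintype.card K + p ^ c * (3 * F.natDegree + 4) := by exact_mod_cast h2
  have h0' : (#{x : K | F.eval x = 0} : ℤ) ≤ F.natDegree := by exact_mod_cast h0
  constructor <;> linarith

theorem abs_sum_quadraticChar_eval_le {K : Type*} [Field K] [Fintype K] [DecidableEq K] {p : ℕ}
    [Fact p.Prime] [CharP K p] (hp : Odd p) {n : ℕ} (hK : Fintype.card K = p ^ n)
    {F : K[X]} (hF : F.Separable) (hD : 0 < F.natDegree) :
    |((∑ x : K, quadraticChar K (F.eval x) : ℤ) : ℝ)|
      ≤ (4 * F.natDegree + 8) * √p * √p ^ n := by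
  set D := F.natDegree with hDdef
  have hFne : F ≠ 0 := by rintro rfl; simp [hDdef] at hD
  have hp1 : (1 : ℝ) ≤ √p := Real.one_le_sqrt.2 (by exact_mod_cast (Fact.out : p.Prime).one_le)
  have hsq : (√p) ^ 2 = (p : ℝ) := Real.sq_sqrt (Nat.cast_nonneg p)
  obtain ⟨b, c, hbc, hn, hcn⟩ : ∃ b c, b ≤ c ∧ n = b + c ∧ 2 * c ≤ n + 1 :=
    ⟨n / 2, n - n / 2, by omega, by omega, by omega⟩
  have hpc : ((p ^ c : ℕ) : ℝ) = √p ^ (2 * c) := by rw [pow_mul, hsq]; simp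
  have hpc' : ((p ^ c : ℕ) : ℝ) ≤ √p * √p ^ n := by
    rw [hpc, ← pow_succ']
    exact pow_le_pow_right₀ hp1 hcn
  have hpcn : √p ^ n ≤ ((p ^ c : ℕ) : ℝ) := by
    rw [hpc]
    exact pow_le_pow_right₀ hp1 (by omega)
  have hpn : 0 < √p ^ n := by positivity
  by_cases hM : 4 * D + 8 < p ^ c
  · have hcardD : F.roots.toFinset.card < Fintype.card K := by
      refine lt_of_le_of_lt ((Multiset.toFinset_card_le _).trans (card_roots' _)) ?_
      have : p ^ c ≤ p ^ n := Nat.pow_le_pow_right (Fact.out : p.Prime).pos (by omega)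
      omega
    obtain ⟨z, hz⟩ : ∃ z, F.eval z ≠ 0 := by
      by_contra! hall
      apply hcardD.ne
      rw [← Finset.card_univ]
      congr 1
      ext x
      simp [hFne, hall x]
    have hnd : (F.comp (X + C z)).natDegree = D := by rw [natDegree_comp]; simp [hDdef]
    have key := abs_sum_quadraticChar_eval_le_of_coeff_zero_ne (F := F.comp (X + C z)) hp
      (by rw [hK, hn, pow_add]) hbc
      (hF.comp_of_derivative_eq_C one_ne_zero (by simp)) (by rw [hnd]; exact hD)
      (by rw [coeff_zero_eq_eval_zero]; simpa using hz) (by rw [hnd]; exact hM)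
    rw [hnd] at key
    have hshift : ∑ x : K, quadraticChar K ((F.comp (X + C z)).eval x)
        = ∑ x : K, quadraticChar K (F.eval x) := by
      refine Fintype.sum_equiv (Equiv.addRight z) _ _ fun x => ?_
      simp
    rw [hshift] at key
    have key' : |((∑ x : K, quadraticChar K (F.eval x) : ℤ) : ℝ)|
        ≤ ((p ^ c : ℕ) : ℝ) * (3 * D + 4) + D := by exact_mod_cast key
    have hc1 : (1 : ℝ) ≤ ((p ^ c : ℕ) : ℝ) := by
      exact_mod_cast Nat.one_le_pow _ _ (Fact.out : p.Prime).pos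
    have hD0 : (0 : ℝ) ≤ D := Nat.cast_nonneg _
    calc _ ≤ ((p ^ c : ℕ) : ℝ) * (3 * D + 4) + D := key'
      _ ≤ (4 * D + 8) * ((p ^ c : ℕ) : ℝ) := by nlinarith
      _ ≤ (4 * D + 8) * (√p * √p ^ n) := by gcongr
      _ = _ := by ring
  · have hM' : ((p ^ c : ℕ) : ℝ) ≤ 4 * D + 8 := by exact_mod_cast not_lt.1 hM
    have htriv : |∑ x : K, quadraticChar K (F.eval x)| ≤ (p ^ n : ℕ) := by
      refine (Finset.abs_sum_le_sum_abs _ _).trans ?_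
      have hone : ∀ a : K, |quadraticChar K a| ≤ 1 := by
        intro a
        by_cases ha : a = 0
        · simp [ha]
        · rcases quadraticChar_dichotomy ha with h | h <;> simp [h]
      refine (Finset.sum_le_sum fun x _ => hone _).trans ?_
      simp [hK]
    have htriv' : |((∑ x : K, quadraticChar K (F.eval x) : ℤ) : ℝ)| ≤ (p : ℝ) ^ n := by
      exact_mod_cast htriv
    calc _ ≤ (p : ℝ) ^ n := htriv'
      _ = √p ^ n * √p ^ n := by rw [← mul_pow, ← sq, hsq]
      _ ≤ (4 * D + 8) * √p ^ n := by gcongr; exact hpcn.trans hM'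
      _ ≤ (4 * D + 8) * √p * √p ^ n := by
        gcongr
        exact le_mul_of_one_le_right (by positivity) hp1

theorem norm_sum_quadraticChar_mul_trace_le {K : Type*} [Field K] [Fintype K] [DecidableEq K]
    {p : ℕ} [Fact p.Prime] [Algebra (ZMod p) K] (hp : Odd p) {n : ℕ}
    (hK : Fintype.card K = p ^ n) (A : Finset (ZMod p)) (hA : A.Nonempty)
    (ψ : AddChar (ZMod p) ℂ) :
    ‖∑ t : K, ((quadraticChar K (∏ a ∈ A, (algebraMap (ZMod p) K a - t)) : ℤ) : ℂ)
        * ψ (Algebra.trace (ZMod p) K t)‖ ≤ (4 * (#A * p : ℕ) + 8) * √p * √p ^ n := by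
  have : CharP K p := charP_of_injective_algebraMap (algebraMap (ZMod p) K).injective p
  have hpp : p.Prime := Fact.out
  set B : ℝ := (4 * (#A * p : ℕ) + 8) * √p * √p ^ n with hB
  set f : K[X] := ∏ a ∈ A, (X - C (algebraMap (ZMod p) K a)) with hf
  have hfsep : f.Separable :=
    separable_prod_X_sub_C_iff'.2 fun x _ y _ h => (algebraMap (ZMod p) K).injective h
  have hfdeg : f.natDegree = #A := by rw [hf, natDegree_finsetProd_X_sub_C_eq_card]
  set g : K → K[X] := fun s => X ^ p - X + C s with hg
  have hgdeg : ∀ s, (g s).natDegree = p := by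
    intro s
    rw [hg, natDegree_add_C]
    exact FiniteField.X_pow_card_sub_X_natDegree_eq K hpp.one_lt
  have hgder : ∀ s, derivative (g s) = C (-1) := by
    intro s
    simp [hg, derivative_X_pow]
  have hinner : ∀ s : K, |((∑ z : K, quadraticChar K (f.eval (z ^ p - z + s)) : ℤ) : ℝ)| ≤ B := by
    intro s
    have hnd : (f.comp (g s)).natDegree = #A * p := by rw [natDegree_comp, hfdeg, hgdeg]
    have key := abs_sum_quadraticChar_eval_le hp hK
      (hfsep.comp_of_derivative_eq_C (neg_ne_zero.2 one_ne_zero) (hgder s))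
      (by rw [hnd]; exact Nat.mul_pos hA.card_pos hpp.pos)
    rw [hnd] at key
    simpa [hg, hB] using key
  have hQ : (0 : ℝ) < Fintype.card K := by exact_mod_cast Fintype.card_pos
  set h : K → ℂ := fun t => ((quadraticChar K (f.eval t) : ℤ) : ℂ)
    * ψ (Algebra.trace (ZMod p) K t) with hh
  have htr : ∀ z : K, Algebra.trace (ZMod p) K (z ^ p) = Algebra.trace (ZMod p) K z := by
    intro z
    have := Algebra.trace_eq_of_algEquiv (FiniteField.frobeniusAlgEquiv (ZMod p) K p) z
    simpa using this
  have hdouble : (Fintype.card K : ℂ) * ∑ t : K, h t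
      = ∑ s : K, ψ (Algebra.trace (ZMod p) K s)
        * ((∑ z : K, quadraticChar K (f.eval (z ^ p - z + s)) : ℤ) : ℂ) := by
    have h1 : ∀ z : K, ∑ t : K, h t = ∑ s : K, h (z ^ p - z + s) := fun z =>
      (Fintype.sum_equiv (Equiv.addLeft (z ^ p - z)) _ _ fun s => rfl).symm
    have h2 : (Fintype.card K : ℂ) * ∑ t : K, h t = ∑ z : K, ∑ s : K, h (z ^ p - z + s) := by
      rw [Finset.sum_congr rfl fun z _ => (h1 z).symm]
      simp
    rw [h2, Finset.sum_comm]
    refine Finset.sum_congr rfl fun s _ => ?_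
    rw [Int.cast_sum, Finset.mul_sum]
    refine Finset.sum_congr rfl fun z _ => ?_
    simp only [hh, map_add, map_sub, htr, sub_self, zero_add]
    ring
  have hnorm : (Fintype.card K : ℝ) * ‖∑ t : K, h t‖ ≤ Fintype.card K * B := by
    have h3 := congrArg norm hdouble
    rw [norm_mul, Complex.norm_natCast] at h3
    rw [h3]
    refine (norm_sum_le _ _).trans ?_
    refine (Finset.sum_le_sum fun s _ => (?_ : _ ≤ B)).trans (by simp)
    rw [norm_mul, AddChar.norm_apply, one_mul, Complex.norm_intCast]
    exact hinner s
  have hfin := le_of_mul_le_mul_left hnorm hQ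
  have hsign : ∀ t : K, ∏ a ∈ A, (algebraMap (ZMod p) K a - t) = (-1) ^ #A * f.eval t := by
    intro t
    rw [hf, eval_prod, ← Finset.prod_const, ← Finset.prod_mul_distrib]
    simp
  have hrw : ∑ t : K, ((quadraticChar K (∏ a ∈ A, (algebraMap (ZMod p) K a - t)) : ℤ) : ℂ)
        * ψ (Algebra.trace (ZMod p) K t)
      = ((quadraticChar K ((-1) ^ #A) : ℤ) : ℂ) * ∑ t : K, h t := by
    rw [Finset.mul_sum]
    refine Finset.sum_congr rfl fun t _ => ?_
    rw [hsign, map_mul, Int.cast_mul, mul_assoc]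
  rw [hrw, norm_mul]
  have hu : ‖((quadraticChar K ((-1) ^ #A) : ℤ) : ℂ)‖ = 1 := by
    rcases quadraticChar_dichotomy (F := K) (a := (-1) ^ #A) (by simp) with h | h <;> simp [h]
  rw [hu, one_mul]
  exact hfin

end CharacterSums

section Norms

open Polynomial IntermediateField

theorem finrank_adjoin_mul_natDegree_minpoly {k K : Type*} [Field k] [Field K] [Algebra k K]
    [FiniteDimensional k K] (t : K) :
    Module.finrank k⟮t⟯ K * (minpoly k t).natDegree = Module.finrank k K := by
  rw [← IntermediateField.adjoin.finrank (Algebra.IsIntegral.isIntegral t), mul_comm,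
    Module.finrank_mul_finrank]

theorem norm_algebraMap_sub_eq_eval_minpoly_pow {k K : Type*} [Field k] [Field K] [Algebra k K]
    [FiniteDimensional k K] (t : K) (a : k) :
    Algebra.norm k (algebraMap k K a - t) = (minpoly k t).eval a ^ Module.finrank k⟮t⟯ K := by
  have hmin := minpoly.sub_algebraMap (A := k) t a
  have hdeg : (minpoly k (t - algebraMap k K a)).natDegree = (minpoly k t).natDegree := by
    rw [hmin, natDegree_comp]; simp
  have hpos : 0 < (minpoly k t).natDegree := minpoly.natDegree_pos (Algebra.IsIntegral.isIntegral t)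
  have hfr : Module.finrank k⟮t - algebraMap k K a⟯ K = Module.finrank k⟮t⟯ K := by
    have h1 := finrank_adjoin_mul_natDegree_minpoly (k := k) (t - algebraMap k K a)
    rw [hdeg, ← finrank_adjoin_mul_natDegree_minpoly (k := k) t] at h1
    exact Nat.eq_of_mul_eq_mul_right hpos h1
  have hnorm : Algebra.norm k (AdjoinSimple.gen k (t - algebraMap k K a))
      = (-1) ^ (minpoly k t).natDegree * (minpoly k t).eval a := by
    have h2 := Algebra.PowerBasis.norm_gen_eq_coeff_zero_minpoly
      (adjoin.powerBasis (Algebra.IsIntegral.isIntegral (R := k) (t - algebraMap k K a)))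
    rw [adjoin.powerBasis_gen, minpoly_gen, adjoin.powerBasis_dim, hdeg] at h2
    rw [h2, hmin, coeff_zero_eq_eval_zero]
    simp
  rw [← neg_sub, ← neg_one_mul, map_mul, Algebra.norm_eq_norm_adjoin k (t - algebraMap k K a),
    hnorm, hfr, mul_pow, ← pow_mul, mul_comm (minpoly k t).natDegree,
    finrank_adjoin_mul_natDegree_minpoly, ← mul_assoc]
  have : Algebra.norm k (-1 : K) = (-1) ^ Module.finrank k K := by
    rw [← map_one (algebraMap k K), ← map_neg, Algebra.norm_algebraMap]
  rw [this, ← mul_pow]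
  simp

theorem quadraticChar_norm {p : ℕ} [Fact p.Prime] (hp : Odd p) {K : Type*} [Field K] [Fintype K]
    [DecidableEq K] [Algebra (ZMod p) K] (y : K) :
    quadraticChar (ZMod p) (Algebra.norm (ZMod p) y) = quadraticChar K y := by
  have : CharP K p := charP_of_injective_algebraMap (algebraMap (ZMod p) K).injective p
  have h2 : p ≠ 2 := by rintro rfl; exact absurd hp (by decide)
  have hcK : ringChar K ≠ 2 := by rwa [ringChar.eq K p]
  have hcF : ringChar (ZMod p) ≠ 2 := by rwa [ringChar.eq (ZMod p) p]
  by_cases hy : y = 0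
  · simp [hy]
  have hN : Algebra.norm (ZMod p) y ≠ 0 := Algebra.norm_ne_zero_iff.2 hy
  have key : ((quadraticChar (ZMod p) (Algebra.norm (ZMod p) y) : ℤ) : K)
      = (quadraticChar K y : ℤ) := by
    have e1 := quadraticChar_eq_pow_of_char_ne_two' hcF (Algebra.norm (ZMod p) y)
    have e2 := quadraticChar_eq_pow_of_char_ne_two' hcK y
    have e3 := congrArg (algebraMap (ZMod p) K) e1
    rw [map_intCast, map_pow, FiniteField.algebraMap_norm_eq_pow, ← pow_mul] at e3
    rw [e3, e2]
    congr 1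
    have hc1 : Nat.card (ZMod p) = p := by simp
    have hc2 : Fintype.card (ZMod p) = p := ZMod.card p
    have hc3 : Nat.card K = Fintype.card K := Nat.card_eq_fintype_card
    have hcard : Fintype.card K = p ^ Module.finrank (ZMod p) K := by
      rw [Module.card_eq_pow_finrank (K := ZMod p), hc2]
    rw [hc1, hc2, hc3]
    obtain ⟨d, hd⟩ : p - 1 ∣ Fintype.card K - 1 := by
      rw [hcard]; simpa using Nat.sub_dvd_pow_sub_pow p 1 (Module.finrank (ZMod p) K)
    have hK1 : 0 < Fintype.card K := Fintype.card_pos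
    obtain ⟨m, hm⟩ := hp
    have hm0 : 0 < m := by
      have := (Fact.out : p.Prime).one_lt
      omega
    have hd' : Fintype.card K - 1 = 2 * (m * d) := by
      rw [hd, hm]
      simp only [Nat.add_sub_cancel]
      ring
    rw [hd, show p - 1 = 2 * m by omega, Nat.mul_div_cancel_left _ (by omega),
      show p / 2 = m by omega, show Fintype.card K / 2 = m * d by omega, mul_comm]
  rcases quadraticChar_dichotomy hN with h | h <;>
    rcases quadraticChar_dichotomy hy with h' | h' <;>
    rw [h, h'] at key ⊢
  · exact absurd key (by simpa using (Ring.neg_one_ne_one_of_char_ne_two hcK).symm)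
  · exact absurd key (by simpa using (Ring.neg_one_ne_one_of_char_ne_two hcK))

end Norms

section EulerProduct

open Polynomial

theorem Polynomial.finite_setOf_monic_natDegree_eq (F : Type*) [Field F] [Finite F] (d : ℕ) :
    {g : F[X] | g.Monic ∧ g.natDegree = d}.Finite := by
  have : Finite (degreeLT F (d + 1)) := Finite.of_equiv _ (degreeLTEquiv F (d + 1)).symm.toEquiv
  refine (Set.toFinite (degreeLT F (d + 1) : Set F[X])).subset fun g hg => ?_
  rw [SetLike.mem_coe, mem_degreeLT]
  refine lt_of_le_of_lt degree_le_natDegree ?_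
  rw [hg.2]
  exact_mod_cast Nat.lt_succ_self d

/-- The monic polynomials of degree `d` over a finite field. -/
noncomputable def monics (F : Type*) [Field F] [Finite F] (d : ℕ) : Finset F[X] :=
  (Polynomial.finite_setOf_monic_natDegree_eq F d).toFinset

open scoped Classical in
/-- The monic irreducible polynomials of degree `d` over a finite field. -/
noncomputable def monicIrreducibles (F : Type*) [Field F] [Finite F] (d : ℕ) : Finset F[X] :=
  (monics F d).filter Irreducible

theorem map_pow_of_map_mul_monic {F R : Type*} [Field F] [CommSemiring R] {Λ : F[X] → R}
    (h1 : Λ 1 = 1) (hmul : ∀ f g : F[X], f.Monic → g.Monic → Λ (f * g) = Λ f * Λ g)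
    {P : F[X]} (hP : P.Monic) (i : ℕ) : Λ (P ^ i) = Λ P ^ i := by
  induction i with
  | zero => simpa using h1
  | succ i ih => rw [pow_succ, hmul _ _ (hP.pow i) hP, ih, pow_succ]

section
variable {F : Type*} [Field F] [Finite F]

theorem mem_monics {d : ℕ} {g : F[X]} : g ∈ monics F d ↔ g.Monic ∧ g.natDegree = d := by
  simp [monics]

theorem mem_monicIrreducibles {d : ℕ} {g : F[X]} :
    g ∈ monicIrreducibles F d ↔ (g.Monic ∧ g.natDegree = d) ∧ Irreducible g := by
  simp [monicIrreducibles, mem_monics]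

open UniqueFactorizationMonoid in
open scoped Classical in
theorem sum_card_pow_dvd_mul_eq_natDegree {d : ℕ} {g : F[X]} (hg : g ∈ monics F d) :
    ∑ e ∈ Icc 1 d, ∑ P ∈ monicIrreducibles F e, #{i ∈ Icc 1 d | P ^ i ∣ g} * e = d := by
  rw [mem_monics] at hg
  obtain ⟨hm, hd⟩ := hg
  have hg0 : g ≠ 0 := hm.ne_zero
  have hmon : ∀ P ∈ normalizedFactors g, P.Monic ∧ Irreducible P := fun P hP => by
    have hi := irreducible_of_normalized_factor P hP
    refine ⟨?_, hi⟩
    have := normalize_normalized_factor P hP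
    rw [← this]
    exact Polynomial.monic_normalize hi.ne_zero
  have hprod : (normalizedFactors g).prod = g := by
    have h1 := prod_normalizedFactors_eq hg0
    rwa [hm.normalize_eq_self] at h1
  have hdeg : d = ∑ P ∈ (normalizedFactors g).toFinset,
      (normalizedFactors g).count P * P.natDegree := by
    rw [← hd]
    conv_lhs => rw [← hprod]
    rw [natDegree_multiset_prod_of_monic _ (fun P hP => (hmon P hP).1),
      Finset.sum_multiset_map_count]
    simp
  have hcount : ∀ P : F[X], P.Monic → Irreducible P →
      (normalizedFactors g).count P = #{i ∈ Icc 1 d | P ^ i ∣ g} := by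
    intro P hP hi
    have h1 := emultiplicity_eq_count_normalizedFactors hi hg0
    rw [hP.normalize_eq_self] at h1
    have h2 : ∀ i, P ^ i ∣ g ↔ i ≤ (normalizedFactors g).count P := by
      intro i
      rw [pow_dvd_iff_le_emultiplicity, h1]
      exact_mod_cast Iff.rfl
    have hle : (normalizedFactors g).count P ≤ d := by
      have h3 := natDegree_le_of_dvd ((h2 _).2 le_rfl) hg0
      rw [natDegree_pow, hd] at h3
      exact le_trans (Nat.le_mul_of_pos_right _ hi.natDegree_pos) h3
    have : ({i ∈ Icc 1 d | P ^ i ∣ g} : Finset ℕ) = Icc 1 ((normalizedFactors g).count P) := by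
      ext i
      simp only [mem_filter, mem_Icc, h2]
      omega
    rw [this]
    simp
  conv_rhs => rw [hdeg]
  have hmaps : ∀ P ∈ (normalizedFactors g).toFinset, P.natDegree ∈ Icc 1 d := by
    intro P hP
    rw [Multiset.mem_toFinset] at hP
    rw [mem_Icc]
    refine ⟨(hmon P hP).2.natDegree_pos, ?_⟩
    rw [← hd]
    exact natDegree_le_of_dvd (dvd_of_mem_normalizedFactors hP) hg0
  rw [← Finset.sum_fiberwise_of_maps_to hmaps]
  refine Finset.sum_congr rfl fun e he => ?_
  symm
  refine Finset.sum_subset_zero_on_sdiff ?_ ?_ ?_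
  · intro P hP
    rw [mem_filter, Multiset.mem_toFinset] at hP
    exact mem_monicIrreducibles.2 ⟨⟨(hmon P hP.1).1, hP.2⟩, (hmon P hP.1).2⟩
  · intro P hP
    rw [mem_sdiff, mem_monicIrreducibles, mem_filter, Multiset.mem_toFinset] at hP
    obtain ⟨⟨⟨h1, h2⟩, h3⟩, h4⟩ := hP
    rw [← hcount P h1 h3, Multiset.count_eq_zero_of_notMem (fun h => h4 ⟨h, h2⟩), zero_mul]
  · intro P hP
    rw [mem_filter, Multiset.mem_toFinset] at hP
    rw [hcount P (hmon P hP.1).1 (hmon P hP.1).2, hP.2]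

open scoped Classical in
theorem sum_monics_filter_dvd {R : Type*} [CommSemiring R] {Λ : F[X] → R}
    (hmul : ∀ f g : F[X], f.Monic → g.Monic → Λ (f * g) = Λ f * Λ g) {Q : F[X]} (hQ : Q.Monic)
    {d : ℕ} (hd : Q.natDegree ≤ d) :
    ∑ g ∈ monics F d with Q ∣ g, Λ g = Λ Q * ∑ g ∈ monics F (d - Q.natDegree), Λ g := by
  rw [Finset.mul_sum]
  symm
  refine Finset.sum_nbij (fun h => Q * h) ?_ ?_ ?_ ?_
  · intro h hh
    rw [mem_monics] at hh
    rw [mem_filter, mem_monics, hQ.natDegree_mul hh.1, hh.2]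
    exact ⟨⟨hQ.mul hh.1, by omega⟩, dvd_mul_right _ _⟩
  · intro a _ b _ hab
    exact mul_left_cancel₀ hQ.ne_zero hab
  · intro g hg
    rw [mem_coe, mem_filter, mem_monics] at hg
    obtain ⟨⟨hm, hn⟩, h, rfl⟩ := hg
    have hh := hQ.of_mul_monic_left hm
    refine ⟨h, ?_, rfl⟩
    rw [mem_coe, mem_monics]
    rw [hQ.natDegree_mul hh] at hn
    exact ⟨hh, by omega⟩
  · intro h hh
    rw [mem_monics] at hh
    exact (hmul _ _ hQ hh.1).symm

theorem Nat.sum_Icc_sum_divisorsAntidiagonal {M : Type*} [AddCommMonoid M] (d : ℕ)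
    (f : ℕ × ℕ → M) :
    ∑ j ∈ Icc 1 d, ∑ x ∈ j.divisorsAntidiagonal, f x
      = ∑ x ∈ Icc 1 d ×ˢ Icc 1 d with x.1 * x.2 ≤ d, f x := by
  have hmaps : ∀ x ∈ (Icc 1 d ×ˢ Icc 1 d).filter (fun x => x.1 * x.2 ≤ d), x.1 * x.2 ∈ Icc 1 d := by
    rintro ⟨a, b⟩ hx
    simp only [mem_filter, mem_product, mem_Icc] at hx ⊢
    exact ⟨Nat.mul_pos hx.1.1.1 hx.1.2.1, hx.2⟩
  rw [← Finset.sum_fiberwise_of_maps_to hmaps]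
  refine Finset.sum_congr rfl fun j hj => Finset.sum_congr ?_ fun _ _ => rfl
  ext ⟨a, b⟩
  simp only [Nat.mem_divisorsAntidiagonal, mem_filter, mem_product, mem_Icc] at hj ⊢
  constructor
  · rintro ⟨rfl, h0⟩
    have ha : 0 < a := Nat.pos_of_ne_zero fun h => h0 (by simp [h])
    have hb : 0 < b := Nat.pos_of_ne_zero fun h => h0 (by simp [h])
    refine ⟨⟨⟨⟨ha, ?_⟩, ⟨hb, ?_⟩⟩, hj.2⟩, rfl⟩
    · exact le_trans (Nat.le_mul_of_pos_right _ hb) hj.2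
    · exact le_trans (Nat.le_mul_of_pos_left _ ha) hj.2
  · rintro ⟨_, rfl⟩
    exact ⟨rfl, by omega⟩

/-- The logarithmic derivative of the Euler product of a completely multiplicative function. -/
theorem nsmul_sum_monics_eq {R : Type*} [CommSemiring R] {Λ : F[X] → R} (h1 : Λ 1 = 1)
    (hmul : ∀ f g : F[X], f.Monic → g.Monic → Λ (f * g) = Λ f * Λ g) (d : ℕ) :
    (d : R) * ∑ g ∈ monics F d, Λ g
      = ∑ j ∈ Icc 1 d, (∑ x ∈ j.divisorsAntidiagonal, ∑ P ∈ monicIrreducibles F x.1,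
          (x.1 : R) * Λ P ^ x.2) * ∑ g ∈ monics F (d - j), Λ g := by
  classical
  have hR : ∀ j ∈ Icc 1 d, (∑ x ∈ j.divisorsAntidiagonal, ∑ P ∈ monicIrreducibles F x.1,
      (x.1 : R) * Λ P ^ x.2) * ∑ g ∈ monics F (d - j), Λ g
      = ∑ x ∈ j.divisorsAntidiagonal, ∑ P ∈ monicIrreducibles F x.1,
          (x.1 : R) * ∑ g ∈ monics F d with P ^ x.2 ∣ g, Λ g := by
    intro j hj
    rw [Finset.sum_mul]
    refine Finset.sum_congr rfl fun x hx => ?_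
    rw [Finset.sum_mul]
    refine Finset.sum_congr rfl fun P hP => ?_
    rw [mem_monicIrreducibles] at hP
    rw [Nat.mem_divisorsAntidiagonal] at hx
    rw [mem_Icc] at hj
    have hdeg : (P ^ x.2).natDegree = j := by
      rw [hP.1.1.natDegree_pow, hP.1.2, mul_comm, hx.1]
    rw [sum_monics_filter_dvd hmul (hP.1.1.pow _) (by omega), hdeg,
      map_pow_of_map_mul_monic h1 hmul hP.1.1, mul_assoc]
  rw [Finset.sum_congr rfl hR, Nat.sum_Icc_sum_divisorsAntidiagonal d
    (fun x => ∑ P ∈ monicIrreducibles F x.1,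
          (x.1 : R) * ∑ g ∈ monics F d with P ^ x.2 ∣ g, Λ g)]
  rw [Finset.sum_filter_of_ne, Finset.sum_product]
  · have hL : ∀ g ∈ monics F d, (d : R) * Λ g = ∑ e ∈ Icc 1 d, ∑ i ∈ Icc 1 d,
        ∑ P ∈ monicIrreducibles F e, (e : R) * if P ^ i ∣ g then Λ g else 0 := by
      intro g hg
      conv_lhs => rw [← sum_card_pow_dvd_mul_eq_natDegree hg]
      push_cast
      rw [Finset.sum_mul]
      refine Finset.sum_congr rfl fun e _ => ?_
      rw [Finset.sum_comm, Finset.sum_mul]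
      refine Finset.sum_congr rfl fun P _ => ?_
      rw [← Finset.mul_sum, ← Finset.sum_filter, Finset.sum_const, nsmul_eq_mul]
      ring
    rw [Finset.mul_sum, Finset.sum_congr rfl hL, Finset.sum_comm]
    refine Finset.sum_congr rfl fun e _ => ?_
    rw [Finset.sum_comm]
    refine Finset.sum_congr rfl fun i _ => ?_
    rw [Finset.sum_comm]
    refine Finset.sum_congr rfl fun P _ => ?_
    rw [← Finset.mul_sum, ← Finset.sum_filter]
  · intro x _ hx
    by_contra hlt
    refine hx (Finset.sum_eq_zero fun P hP => ?_)
    rw [mem_monicIrreducibles] at hP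
    rw [Finset.filter_false_of_mem, Finset.sum_empty, mul_zero]
    intro g hg hdvd
    rw [mem_monics] at hg
    have := natDegree_le_of_dvd hdvd hg.1.ne_zero
    rw [hP.1.1.natDegree_pow, hP.1.2, hg.2, mul_comm] at this
    exact hlt this

end

end EulerProduct

section LFunction

open Polynomial IntermediateField

theorem card_filter_minpoly_eq {k K : Type*} [Field k] [Finite k] [Field K] [Fintype K]
    [Algebra k K] [DecidableEq k[X]] {P : k[X]} (hP : P.Monic) (hirr : Irreducible P)
    (hdvd : P.natDegree ∣ Module.finrank k K) :
    #{t : K | minpoly k t = P} = P.natDegree := by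
  classical
  have hset : ({t : K | minpoly k t = P} : Finset K) = (P.rootSet K).toFinset := by
    ext t
    rw [mem_filter, Set.mem_toFinset, mem_rootSet]
    constructor
    · rintro ⟨-, rfl⟩
      exact ⟨hP.ne_zero, minpoly.aeval k t⟩
    · rintro ⟨-, ht⟩
      exact ⟨mem_univ _, (minpoly.eq_of_irreducible_of_monic hirr ht hP).symm⟩
  rw [hset, Set.toFinset_card]
  have hcard : Nat.card k ^ Module.finrank k K = Nat.card K :=
    (Module.natCard_eq_pow_finrank (K := k) (V := K)).symm
  have hd := (hirr.natDegree_dvd_iff_dvd_X_pow_card_pow_sub_X (n := Module.finrank k K)).1 hdvd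
  rw [hcard] at hd
  refine card_rootSet_eq_natDegree (PerfectField.separable_of_irreducible hirr) ?_
  have hs : Splits (X ^ (Nat.card K) - X : K[X]) := Polynomial.splits_X_pow_nat_card_sub_X
  refine hs.of_dvd ?_ ?_
  · exact FiniteField.X_pow_card_sub_X_ne_zero K Finite.one_lt_card
  · simpa using Polynomial.map_dvd (algebraMap k K) hd

/-- Summing over the elements of a finite extension according to their minimal polynomials. -/
theorem sum_minpoly_eq_sum_monicIrreducibles {k K M : Type*} [Field k] [Finite k] [Field K]
    [Fintype K] [Algebra k K] [AddCommMonoid M] (f : k[X] → ℕ → M) :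
    ∑ t : K, f (minpoly k t) (Module.finrank k⟮t⟯ K)
      = ∑ x ∈ (Module.finrank k K).divisorsAntidiagonal, ∑ P ∈ monicIrreducibles k x.1,
          x.1 • f P x.2 := by
  classical
  have hn : Module.finrank k K ≠ 0 := Module.finrank_pos.ne'
  have hmaps : ∀ t ∈ (univ : Finset K), ((minpoly k t).natDegree, Module.finrank k⟮t⟯ K) ∈
      (Module.finrank k K).divisorsAntidiagonal := by
    intro t _
    rw [Nat.mem_divisorsAntidiagonal]
    exact ⟨by rw [mul_comm]; exact finrank_adjoin_mul_natDegree_minpoly t, hn⟩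
  rw [← Finset.sum_fiberwise_of_maps_to hmaps]
  refine Finset.sum_congr rfl fun x hx => ?_
  rw [Nat.mem_divisorsAntidiagonal] at hx
  have hx1 : 0 < x.1 := Nat.pos_of_ne_zero fun h => hx.2 (by rw [← hx.1, h, zero_mul])
  have hmaps' : ∀ t ∈ ({t : K | ((minpoly k t).natDegree, Module.finrank k⟮t⟯ K) = x} : Finset K),
      minpoly k t ∈ monicIrreducibles k x.1 := by
    intro t ht
    rw [mem_filter] at ht
    have hi : IsIntegral k t := Algebra.IsIntegral.isIntegral t
    exact mem_monicIrreducibles.2 ⟨⟨minpoly.monic hi, by rw [← ht.2]⟩, minpoly.irreducible hi⟩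
  rw [← Finset.sum_fiberwise_of_maps_to hmaps']
  refine Finset.sum_congr rfl fun P hP => ?_
  rw [mem_monicIrreducibles] at hP
  have hset : ({t ∈ ({t : K | ((minpoly k t).natDegree, Module.finrank k⟮t⟯ K) = x} : Finset K) |
      minpoly k t = P} : Finset K) = ({t : K | minpoly k t = P} : Finset K) := by
    ext t
    simp only [mem_filter, mem_univ, true_and, and_iff_right_iff_imp]
    intro ht
    have h1 := finrank_adjoin_mul_natDegree_minpoly (k := k) t
    rw [ht, hP.1.2, ← hx.1, mul_comm] at h1
    rw [ht, hP.1.2, Nat.eq_of_mul_eq_mul_left hx1 h1]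
  have hconst : ∀ t ∈ ({t : K | minpoly k t = P} : Finset K),
      f (minpoly k t) (Module.finrank k⟮t⟯ K) = f P x.2 := by
    intro t ht
    rw [← hset] at ht
    simp only [mem_filter, mem_univ, true_and] at ht
    rw [ht.2, ← ht.1]
  rw [hset, Finset.sum_congr rfl hconst, Finset.sum_const,
    card_filter_minpoly_eq hP.1.1 hP.2 ⟨x.2, by rw [hP.1.2, hx.1]⟩, hP.1.2]

/-- The multiplicative function `g ↦ ∏ χ(g(a)) ψ(-g₁)` on monic polynomials, where `g₁` is the
second-highest coefficient of `g`. -/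
noncomputable def paleyWeight {p : ℕ} [Fact p.Prime] (A : Finset (ZMod p))
    (ψ : AddChar (ZMod p) ℂ) (g : (ZMod p)[X]) : ℂ :=
  (∏ a ∈ A, ((quadraticChar (ZMod p) (g.eval a) : ℤ) : ℂ)) * ψ (-g.nextCoeff)

section
variable {p : ℕ} [Fact p.Prime] (A : Finset (ZMod p)) (ψ : AddChar (ZMod p) ℂ)

theorem paleyWeight_one : paleyWeight A ψ 1 = 1 := by
  have : (1 : (ZMod p)[X]).nextCoeff = 0 := by rw [← C_1, nextCoeff_C_eq_zero]
  simp [paleyWeight, this]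

theorem paleyWeight_mul {f g : (ZMod p)[X]} (hf : f.Monic) (hg : g.Monic) :
    paleyWeight A ψ (f * g) = paleyWeight A ψ f * paleyWeight A ψ g := by
  simp only [paleyWeight, hf.nextCoeff_mul hg, neg_add, AddChar.map_add_eq_mul, eval_mul, map_mul,
    Int.cast_mul, Finset.prod_mul_distrib]
  ring

theorem paleyWeight_X_sub_C (t : ZMod p) :
    paleyWeight A ψ (X - C t)
      = ((quadraticChar (ZMod p) (∏ a ∈ A, (a - t)) : ℤ) : ℂ) * ψ t := by
  simp [paleyWeight, nextCoeff_X_sub_C, map_prod]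

theorem paleyWeight_minpoly_pow (hp : Odd p) {K : Type*} [Field K] [Fintype K] [DecidableEq K]
    [Algebra (ZMod p) K] (t : K) :
    paleyWeight A ψ (minpoly (ZMod p) t) ^ Module.finrank (ZMod p)⟮t⟯ K
      = ((quadraticChar K (∏ a ∈ A, (algebraMap (ZMod p) K a - t)) : ℤ) : ℂ)
          * ψ (Algebra.trace (ZMod p) K t) := by
  rw [paleyWeight, mul_pow, ← AddChar.map_nsmul_eq_pow, trace_eq_finrank_mul_minpoly_nextCoeff,
    nsmul_eq_mul, ← Finset.prod_pow, map_prod]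
  push_cast
  congr 1
  refine Finset.prod_congr rfl fun a _ => ?_
  rw [← quadraticChar_norm hp (algebraMap (ZMod p) K a - t),
    norm_algebraMap_sub_eq_eval_minpoly_pow, map_pow]
  push_cast
  rfl

theorem norm_sum_paleyWeight_pow_le (hp : Odd p) (hA : A.Nonempty) {n : ℕ} (hn : n ≠ 0) :
    ‖∑ x ∈ n.divisorsAntidiagonal, ∑ P ∈ monicIrreducibles (ZMod p) x.1,
        (x.1 : ℂ) * paleyWeight A ψ P ^ x.2‖ ≤ (4 * (#A * p : ℕ) + 8) * √p * √p ^ n := by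
  classical
  have : Fintype (GaloisField p n) := Fintype.ofFinite _
  have h1 := sum_minpoly_eq_sum_monicIrreducibles (k := ZMod p) (K := GaloisField p n)
    (fun P i => paleyWeight A ψ P ^ i)
  simp only [GaloisField.finrank p hn, nsmul_eq_mul] at h1
  rw [← h1]
  simp only [paleyWeight_minpoly_pow A ψ hp]
  refine norm_sum_quadraticChar_mul_trace_le hp ?_ A hA ψ
  rw [← Nat.card_eq_fintype_card, GaloisField.card p n hn]

theorem monics_zero (F : Type*) [Field F] [Finite F] : monics F 0 = {1} := by
  ext g
  rw [mem_monics, mem_singleton]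
  constructor
  · rintro ⟨h, h0⟩
    exact h.natDegree_eq_zero.1 h0
  · rintro rfl
    exact ⟨monic_one, natDegree_one⟩

theorem sum_monics_one {F M : Type*} [Field F] [Fintype F] [AddCommMonoid M] (f : F[X] → M) :
    ∑ g ∈ monics F 1, f g = ∑ t, f (X - C t) := by
  symm
  refine Finset.sum_nbij (fun t => X - C t) ?_ ?_ ?_ ?_
  · intro t _
    exact mem_monics.2 ⟨monic_X_sub_C t, natDegree_X_sub_C t⟩
  · intro s _ t _ h
    simpa using h
  · intro g hg
    rw [mem_coe, mem_monics] at hg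
    refine ⟨-g.coeff 0, by simp, ?_⟩
    have := hg.1.eq_X_add_C hg.2
    simp only [C_neg, sub_neg_eq_add]
    exact this.symm
  · intros; rfl

theorem sum_paleyWeight_monics_eq_zero (hp : Odd p) (hA : A.Nonempty) {d : ℕ} (hd : #A < d) :
    ∑ g ∈ monics (ZMod p) d, paleyWeight A ψ g = 0 := by
  obtain ⟨b, hb⟩ := hA
  have hcard : 0 < #A := card_pos.2 ⟨b, hb⟩
  have hcF : ringChar (ZMod p) ≠ 2 := by
    rw [ringChar.eq (ZMod p) p]
    rintro rfl; exact absurd hp (by decide)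
  set h : (ZMod p)[X] := ∏ a ∈ A.erase b, (X - C a) with hh
  have hdeg : h.natDegree = #A - 1 := by
    rw [hh, natDegree_prod_of_monic _ _ (fun a _ => monic_X_sub_C a)]
    simp [card_erase_of_mem hb]
  have hb0 : h.eval b ≠ 0 := by
    rw [hh, eval_prod, Finset.prod_ne_zero_iff]
    intro a ha
    simp [sub_eq_zero, (ne_of_mem_erase ha).symm]
  have ha0 : ∀ a ∈ A.erase b, h.eval a = 0 := by
    intro a ha
    rw [hh, eval_prod]
    exact Finset.prod_eq_zero ha (by simp)
  have hlt : ∀ c, (C c * h).natDegree < d - 1 := fun c =>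
    lt_of_le_of_lt (natDegree_C_mul_le c h) (by omega)
  have hmem : ∀ c, ∀ g ∈ monics (ZMod p) d, g + C c * h ∈ monics (ZMod p) d := by
    intro c g hg
    rw [mem_monics] at hg ⊢
    have : (C c * h).natDegree < g.natDegree := by have := hlt c; omega
    exact ⟨hg.1.add_of_left (degree_lt_degree this),
      by rw [natDegree_add_eq_left_of_natDegree_lt this, hg.2]⟩
  have hshift : ∀ c, ∑ g ∈ monics (ZMod p) d, paleyWeight A ψ g
      = ∑ g ∈ monics (ZMod p) d, paleyWeight A ψ (g + C c * h) := by
    intro c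
    symm
    refine Finset.sum_bij' (fun g _ => g + C c * h) (fun g _ => g + C (-c) * h)
      (hmem c) (hmem (-c)) ?_ ?_ ?_
    · intro g _; simp
    · intro g _; simp
    · intro g _; rfl
  have hp0 : (p : ℂ) ≠ 0 := by exact_mod_cast (Fact.out : p.Prime).ne_zero
  have htot : (p : ℂ) * ∑ g ∈ monics (ZMod p) d, paleyWeight A ψ g
      = ∑ g ∈ monics (ZMod p) d, ∑ c : ZMod p, paleyWeight A ψ (g + C c * h) := by
    rw [Finset.sum_comm, Finset.sum_congr rfl fun c _ => (hshift c).symm]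
    simp
  refine (mul_eq_zero.1 (htot.trans (Finset.sum_eq_zero fun g hg => ?_))).resolve_left hp0
  have hterm : ∀ c : ZMod p, paleyWeight A ψ (g + C c * h)
      = ((quadraticChar (ZMod p) (g.eval b + c * h.eval b) : ℤ) : ℂ) *
        ((∏ a ∈ A.erase b, ((quadraticChar (ZMod p) (g.eval a) : ℤ) : ℂ)) * ψ (-g.nextCoeff)) := by
    intro c
    have hm := mem_monics.1 (hmem c g hg)
    have hnext : (g + C c * h).nextCoeff = g.nextCoeff := by
      rw [nextCoeff_of_natDegree_pos (by omega), nextCoeff_of_natDegree_pos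
        (by rw [(mem_monics.1 hg).2]; omega), hm.2, (mem_monics.1 hg).2, coeff_add,
        coeff_eq_zero_of_natDegree_lt (hlt c), add_zero]
    rw [paleyWeight, hnext, ← Finset.mul_prod_erase _ _ hb, mul_assoc]
    congr 1
    · simp
    · congr 1
      refine Finset.prod_congr rfl fun a ha => ?_
      simp [ha0 a ha]
  rw [Finset.sum_congr rfl fun c _ => hterm c, ← Finset.sum_mul]
  have hzero : ∑ c : ZMod p, ((quadraticChar (ZMod p) (g.eval b + c * h.eval b) : ℤ) : ℂ) = 0 := by
    rw [Fintype.sum_equiv ((Equiv.mulRight₀ _ hb0).trans (Equiv.addLeft (g.eval b))) _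
      (fun x => ((quadraticChar (ZMod p) x : ℤ) : ℂ)) (fun c => by simp)]
    exact_mod_cast quadraticChar_sum_zero hcF
  rw [hzero, zero_mul]

end

end LFunction

section WeilBound

open Polynomial

open Filter Topology in
theorem eval_ne_zero_of_derivative_eq_mul {L : ℂ[X]} (hL : L ≠ 0) {D : ℂ → ℂ} {B : ℝ} {ρ : ℂ}
    (h : ∀ᶠ z in 𝓝 ρ, (derivative L).eval z = L.eval z * D z ∧ ‖D z‖ ≤ B) : L.eval ρ ≠ 0 := by
  intro hroot
  obtain ⟨Q, hQ, hdvd⟩ := L.exists_eq_pow_rootMultiplicity_mul_and_not_dvd hL ρ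
  have he : 0 < L.rootMultiplicity ρ := (rootMultiplicity_pos hL).2 hroot
  obtain ⟨e, he'⟩ : ∃ e, L.rootMultiplicity ρ = e + 1 := ⟨_, (Nat.succ_pred_eq_of_pos he).symm⟩
  rw [he'] at hQ
  rw [dvd_iff_isRoot, IsRoot.def] at hdvd
  have heq : ∀ᶠ z in 𝓝[≠] ρ,
      (z - ρ) * (Q.eval z * D z) = (e + 1) * Q.eval z + (z - ρ) * (derivative Q).eval z := by
    filter_upwards [h.filter_mono nhdsWithin_le_nhds, self_mem_nhdsWithin] with z hz hne
    have hz0 : z - ρ ≠ 0 := sub_ne_zero.2 hne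
    have h1 := hz.1
    rw [hQ] at h1
    simp only [derivative_mul, derivative_pow, derivative_sub, derivative_X, derivative_C, eval_add,
      eval_mul, eval_pow, eval_sub, eval_X, eval_C, sub_zero, mul_one,
      Nat.add_sub_cancel] at h1
    refine mul_left_cancel₀ (pow_ne_zero e hz0) ?_
    push_cast at h1
    linear_combination -h1
  have hzero : Tendsto (fun z => (z - ρ) * (Q.eval z * D z)) (𝓝[≠] ρ) (𝓝 0) := by
    refine squeeze_zero_norm' (a := fun z => ‖z - ρ‖ * (‖Q.eval z‖ * B)) ?_ ?_
    · filter_upwards [h.filter_mono nhdsWithin_le_nhds] with z hz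
      rw [norm_mul, norm_mul]
      gcongr
      exact hz.2
    · have hc : Continuous fun z => ‖z - ρ‖ * (‖Q.eval z‖ * B) := by fun_prop
      have := hc.tendsto ρ
      simp only [sub_self, norm_zero, zero_mul] at this
      exact this.mono_left nhdsWithin_le_nhds
  have hlim : Tendsto (fun z => (e + 1) * Q.eval z + (z - ρ) * (derivative Q).eval z) (𝓝[≠] ρ)
      (𝓝 ((e + 1) * Q.eval ρ)) := by
    have hc : Continuous fun z => ((e : ℂ) + 1) * Q.eval z + (z - ρ) * (derivative Q).eval z := by
      fun_prop
    have := hc.tendsto ρ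
    simp only [sub_self, zero_mul, add_zero] at this
    exact this.mono_left nhdsWithin_le_nhds
  have := tendsto_nhds_unique (hzero.congr' heq) hlim
  rcases mul_eq_zero.1 this.symm with h0 | h0
  · exact absurd h0 (by exact_mod_cast Nat.succ_ne_zero e)
  · exact hdvd h0

theorem norm_coeff_one_le_of_roots {L : ℂ[X]} (h0 : L.eval 0 = 1) {R : ℝ} (hR : 0 < R)
    (hroots : ∀ ρ : ℂ, ‖ρ‖ < R⁻¹ → L.eval ρ ≠ 0) : ‖L.coeff 1‖ ≤ L.natDegree * R := by
  have h1 := (IsAlgClosed.splits L).eval_derivative_div_eval_of_ne_zero (x := 0) (by simp [h0])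
  rw [h0, div_one, ← coeff_zero_eq_eval_zero, coeff_derivative] at h1
  simp only [zero_add, Nat.cast_zero, mul_one] at h1
  rw [h1]
  refine (norm_multiset_sum_le _).trans ?_
  rw [Multiset.map_map]
  refine (Multiset.sum_le_card_nsmul _ R ?_).trans ?_
  · intro x hx
    obtain ⟨ρ, hρ, rfl⟩ := Multiset.mem_map.1 hx
    have hle : R⁻¹ ≤ ‖ρ‖ := by
      by_contra hlt
      exact hroots ρ (not_le.1 hlt) (isRoot_of_mem_roots hρ)
    simp only [Function.comp_apply, zero_sub, one_div, norm_inv, norm_neg]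
    exact inv_le_of_inv_le₀ hR hle
  · rw [Multiset.card_map, nsmul_eq_mul]
    gcongr
    exact card_roots' L

theorem hasSum_coeff_mul_pow (Q : ℂ[X]) (z : ℂ) :
    HasSum (fun d => Q.coeff d * z ^ d) (Q.eval z) := by
  rw [eval_eq_sum_range]
  refine hasSum_sum_of_ne_finset_zero fun d hd => ?_
  rw [coeff_eq_zero_of_natDegree_lt (by simpa using hd), zero_mul]

/-- If the power sums attached to a polynomial `∑ aₙ Tⁿ` grow like `Rⁿ`, then its linear
coefficient is at most its degree times `R`. -/
theorem norm_le_of_powerSums_bound {a S : ℕ → ℂ} {m : ℕ} (h0 : a 0 = 1) (hm : ∀ d, m < d → a d = 0)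
    (hrec : ∀ d : ℕ, (d : ℂ) * a d = ∑ j ∈ Icc 1 d, S j * a (d - j)) {B R : ℝ} (hR : 0 < R)
    (hS : ∀ j, j ≠ 0 → ‖S j‖ ≤ B * R ^ j) : ‖a 1‖ ≤ m * R := by
  set L : ℂ[X] := ∑ d ∈ range (m + 1), monomial d (a d) with hL
  have hcoeff : ∀ d, L.coeff d = a d := by
    intro d
    rw [hL, finsetSum_coeff]
    simp only [coeff_monomial, sum_ite_eq', mem_range]
    split_ifs with h
    · rfl
    · exact (hm d (by omega)).symm
  have hdeg : L.natDegree ≤ m := by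
    rw [natDegree_le_iff_coeff_eq_zero]
    exact fun d hd => by rw [hcoeff, hm d hd]
  have hL0 : L ≠ 0 := fun h => by
    have := hcoeff 0
    rw [h, h0] at this
    simp at this
  have hB : 0 ≤ B := by
    have := (norm_nonneg _).trans (hS 1 one_ne_zero)
    rw [pow_one] at this
    exact nonneg_of_mul_nonneg_left this hR
  have hrec' : ∀ d : ℕ, ((d : ℂ) + 1) * a (d + 1)
      = ∑ x ∈ antidiagonal d, S (x.1 + 1) * a x.2 := by
    intro d
    have := hrec (d + 1)
    push_cast at this
    rw [this, Finset.Nat.sum_antidiagonal_eq_sum_range_succ (fun i j => S (i + 1) * a j),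
      ← Finset.Ico_add_one_right_eq_Icc, Finset.sum_Ico_eq_sum_range]
    refine Finset.sum_congr rfl fun j _ => ?_
    rw [add_comm 1 j, show d + 1 - (j + 1) = d - j by omega]
  set D : ℂ → ℂ := fun z => ∑' j, S (j + 1) * z ^ j with hD
  have hbound : ∀ r, 0 ≤ r → ∀ z : ℂ, ‖z‖ ≤ r → ∀ j,
      ‖S (j + 1) * z ^ j‖ ≤ B * R * (R * r) ^ j := by
    intro r hr z hz j
    rw [norm_mul, norm_pow]
    calc ‖S (j + 1)‖ * ‖z‖ ^ j ≤ B * R ^ (j + 1) * r ^ j := by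
          gcongr
          exact hS _ (Nat.succ_ne_zero j)
      _ = B * R * (R * r) ^ j := by rw [mul_pow]; ring
  have hderiv : ∀ z : ℂ, ‖z‖ < R⁻¹ → (derivative L).eval z = L.eval z * D z := by
    intro z hz
    have hr1 : R * ‖z‖ < 1 := by
      rw [← mul_inv_cancel₀ hR.ne']
      gcongr
    have hsum : Summable fun j => ‖S (j + 1) * z ^ j‖ :=
      Summable.of_nonneg_of_le (fun _ => norm_nonneg _) (hbound ‖z‖ (norm_nonneg _) z le_rfl)
        ((summable_geometric_of_lt_one (by positivity) hr1).mul_left _)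
    have hsum' : Summable fun d => ‖L.coeff d * z ^ d‖ :=
      summable_of_ne_finset_zero (s := range (m + 1)) fun d hd => by
        rw [hcoeff, hm d (by simpa using hd)]
        simp
    rw [mul_comm, hD, ← (hasSum_coeff_mul_pow L z).tsum_eq,
      tsum_mul_tsum_eq_tsum_sum_antidiagonal_of_summable_norm hsum hsum',
      ← (hasSum_coeff_mul_pow (derivative L) z).tsum_eq]
    refine tsum_congr fun d => ?_
    rw [coeff_derivative, hcoeff, mul_comm (a (d + 1)), hrec', Finset.sum_mul]
    refine Finset.sum_congr rfl fun x hx => ?_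
    rw [hcoeff, ← mem_antidiagonal.1 hx, pow_add]
    ring
  have hroots : ∀ ρ : ℂ, ‖ρ‖ < R⁻¹ → L.eval ρ ≠ 0 := by
    intro ρ hρ
    obtain ⟨r, hr, hrR⟩ := exists_between hρ
    have hr0 : 0 ≤ r := (norm_nonneg _).trans hr.le
    have hr1 : R * r < 1 := by
      rw [← mul_inv_cancel₀ hR.ne']
      gcongr
    refine eval_ne_zero_of_derivative_eq_mul hL0 (D := D) (B := B * R * (1 - R * r)⁻¹) ?_
    filter_upwards [(continuous_norm.tendsto ρ).eventually_lt_const hr] with z hz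
    exact ⟨hderiv z (hz.trans hrR), tsum_of_norm_bounded
      ((hasSum_geometric_of_lt_one (by positivity) hr1).mul_left _) (hbound r hr0 z hz.le)⟩
  have h1 := norm_coeff_one_le_of_roots (by rw [← coeff_zero_eq_eval_zero, hcoeff, h0]) hR hroots
  rw [hcoeff] at h1
  refine h1.trans ?_
  gcongr

/-- Weil's bound for a mixed character sum with square-free split argument. -/
theorem norm_sum_quadraticChar_mul_addChar_le {p : ℕ} [Fact p.Prime] (hp : Odd p)
    {A : Finset (ZMod p)} (hA : A.Nonempty) (ψ : AddChar (ZMod p) ℂ) :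
    ‖∑ t : ZMod p, ((quadraticChar (ZMod p) (∏ a ∈ A, (a - t)) : ℤ) : ℂ) * ψ t‖ ≤ #A * √p := by
  have hp0 : (0 : ℝ) < p := by exact_mod_cast (Fact.out : p.Prime).pos
  have h := norm_le_of_powerSums_bound
    (a := fun d => ∑ g ∈ monics (ZMod p) d, paleyWeight A ψ g) (m := #A)
    (by simp [monics_zero, paleyWeight_one])
    (fun d hd => sum_paleyWeight_monics_eq_zero A ψ hp hA hd)
    (nsmul_sum_monics_eq (paleyWeight_one A ψ) fun f g hf hg => paleyWeight_mul A ψ hf hg)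
    (Real.sqrt_pos.2 hp0) (fun j hj => norm_sum_paleyWeight_pow_le A ψ hp hA hj)
  simpa only [sum_monics_one, paleyWeight_X_sub_C] using h

end WeilBound

open ComplexConjugate in
theorem sum_addChar_norm_sq {α : Type*} [AddCommGroup α] [Fintype α] (f : α → ℝ) :
    ∑ ψ : AddChar α ℂ, ‖∑ u, (f u : ℂ) * ψ (-u)‖ ^ 2 = Fintype.card α * ∑ u, f u ^ 2 := by
  classical
  have key : ∀ ψ : AddChar α ℂ, ((‖∑ u, (f u : ℂ) * ψ (-u)‖ ^ 2 : ℝ) : ℂ)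
      = ∑ u, ∑ v, (f u * f v : ℂ) * ψ (v - u) := by
    intro ψ
    push_cast
    rw [← Complex.mul_conj', map_sum, Finset.sum_mul_sum]
    refine Finset.sum_congr rfl fun u _ => Finset.sum_congr rfl fun v _ => ?_
    rw [map_mul, Complex.conj_ofReal, ← AddChar.map_neg_eq_conj, neg_neg, sub_eq_neg_add,
      AddChar.map_add_eq_mul]
    ring
  have : ((∑ ψ : AddChar α ℂ, ‖∑ u, (f u : ℂ) * ψ (-u)‖ ^ 2 : ℝ) : ℂ)
      = ((Fintype.card α * ∑ u, f u ^ 2 : ℝ) : ℂ) := by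
    rw [Complex.ofReal_sum, Finset.sum_congr rfl fun ψ _ => key ψ, Finset.sum_comm]
    push_cast
    rw [Finset.mul_sum]
    refine Finset.sum_congr rfl fun u _ => ?_
    rw [Finset.sum_comm]
    simp_rw [← Finset.mul_sum, AddChar.sum_apply_eq_ite, sub_eq_zero]
    simp
    ring
  exact_mod_cast this

/-- A function with small Fourier coefficients has small correlation with rank-one functions. -/
theorem abs_sum_mul_mul_add_le {α : Type*} [AddCommGroup α] [Fintype α] {G f g : α → ℝ} {M : ℝ}
    (hG : ∀ ψ : AddChar α ℂ, ‖∑ t, (G t : ℂ) * ψ t‖ ≤ M) (hf : ∀ u, |f u| ≤ 1)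
    (hg : ∀ u, |g u| ≤ 1) :
    |∑ u, ∑ v, f u * g v * G (u + v)| ≤ M * Fintype.card α := by
  classical
  have hM : 0 ≤ M := (norm_nonneg _).trans (hG 0)
  have hc : (0 : ℝ) < Fintype.card α := by exact_mod_cast Fintype.card_pos
  have hinv : ∀ s, (Fintype.card α : ℂ) * G s
      = ∑ ψ : AddChar α ℂ, (∑ t, (G t : ℂ) * ψ t) * ψ (-s) := by
    intro s
    simp_rw [Finset.sum_mul, mul_assoc, ← AddChar.map_add_eq_mul]
    rw [Finset.sum_comm]
    simp_rw [← Finset.mul_sum, AddChar.sum_apply_eq_ite, ← sub_eq_add_neg, sub_eq_zero]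
    simp [mul_comm]
  have hexp : (Fintype.card α : ℂ) * ((∑ u, ∑ v, f u * g v * G (u + v) : ℝ) : ℂ)
      = ∑ ψ : AddChar α ℂ, (∑ t, (G t : ℂ) * ψ t) *
          ((∑ u, (f u : ℂ) * ψ (-u)) * ∑ v, (g v : ℂ) * ψ (-v)) := by
    have h1 : ∀ ψ : AddChar α ℂ, (∑ t, (G t : ℂ) * ψ t) *
          ((∑ u, (f u : ℂ) * ψ (-u)) * ∑ v, (g v : ℂ) * ψ (-v))
        = ∑ u, ∑ v, (f u * g v : ℂ) * ((∑ t, (G t : ℂ) * ψ t) * ψ (-(u + v))) := by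
      intro ψ
      rw [Finset.sum_mul_sum, Finset.mul_sum]
      refine Finset.sum_congr rfl fun u _ => ?_
      rw [Finset.mul_sum]
      refine Finset.sum_congr rfl fun v _ => ?_
      rw [neg_add, AddChar.map_add_eq_mul]
      ring
    rw [Finset.sum_congr rfl fun ψ _ => h1 ψ]
    conv_rhs => rw [Finset.sum_comm]
    push_cast
    rw [Finset.mul_sum]
    refine Finset.sum_congr rfl fun u _ => ?_
    rw [Finset.sum_comm, Finset.mul_sum]
    refine Finset.sum_congr rfl fun v _ => ?_
    rw [← Finset.mul_sum, ← hinv]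
    ring
  have hsq : ∀ h : α → ℝ, (∀ u, |h u| ≤ 1) → ∑ ψ : AddChar α ℂ, ‖∑ u, (h u : ℂ) * ψ (-u)‖ ^ 2
      ≤ (Fintype.card α : ℝ) * Fintype.card α := by
    intro h hh
    rw [sum_addChar_norm_sq]
    gcongr
    refine (Finset.sum_le_card_nsmul _ _ 1 fun u _ => ?_).trans ?_
    · rw [sq_le_one_iff_abs_le_one]
      exact hh u
    · simp
  have hnorm := congrArg norm hexp
  rw [norm_mul, Complex.norm_real, Complex.norm_natCast, Real.norm_eq_abs] at hnorm
  refine le_of_mul_le_mul_left ?_ hc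
  rw [hnorm]
  calc _ ≤ ∑ ψ : AddChar α ℂ, M * ((‖∑ u, (f u : ℂ) * ψ (-u)‖ ^ 2
            + ‖∑ u, (g u : ℂ) * ψ (-u)‖ ^ 2) / 2) := by
        refine norm_sum_le_of_le _ fun ψ _ => ?_
        rw [norm_mul, norm_mul]
        refine mul_le_mul (hG ψ) ?_ (by positivity) hM
        nlinarith [sq_nonneg (‖∑ u, (f u : ℂ) * ψ (-u)‖ - ‖∑ u, (g u : ℂ) * ψ (-u)‖)]
    _ ≤ M * ((Fintype.card α * Fintype.card α + Fintype.card α * Fintype.card α) / 2) := by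
        rw [← Finset.mul_sum, ← Finset.sum_div, Finset.sum_add_distrib]
        gcongr
        · exact hsq f hf
        · exact hsq g hg
    _ = _ := by ring

/-- The real-valued function `s ↦ ∏ χ(a - s)`, the product being over `a ∈ A`. -/
noncomputable def paleyProd {p : ℕ} [Fact p.Prime] (A : Finset (ZMod p)) (s : ZMod p) : ℝ :=
  ((quadraticChar (ZMod p) (∏ a ∈ A, (a - s)) : ℤ) : ℝ)

theorem rpow_neg_half_pow_succ_sq (p n : ℕ) :
    ((p : ℝ) ^ (-(1 / 2 : ℝ) ^ (n + 1))) ^ 2 = (p : ℝ) ^ (-(1 / 2 : ℝ) ^ n) := by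
  rw [← Real.rpow_natCast, ← Real.rpow_mul (Nat.cast_nonneg p)]
  congr 1
  rw [pow_succ]
  push_cast
  ring

section
variable {p : ℕ} [Fact p.Prime]

theorem abs_paleyProd_le_one (A : Finset (ZMod p)) (s : ZMod p) : |paleyProd A s| ≤ 1 := by
  rcases quadraticChar_isQuadratic (ZMod p) (∏ a ∈ A, (a - s)) with h | h | h <;>
    simp [paleyProd, h]

theorem paleyProd_add (A : Finset (ZMod p)) (y s : ZMod p) :
    paleyProd A (y + s) = paleyProd (A.image (· - y)) s := by
  rw [paleyProd, paleyProd, Finset.prod_image fun a _ b _ h => sub_left_injective h]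
  simp only [sub_sub]

theorem paleyProd_mul_of_disjoint {A B : Finset (ZMod p)} (h : Disjoint A B) (s : ZMod p) :
    paleyProd A s * paleyProd B s = paleyProd (A ∪ B) s := by
  simp only [paleyProd]
  rw [Finset.prod_union h, map_mul, Int.cast_mul]

theorem card_not_disjoint_translates_le (A : Finset (ZMod p)) :
    #{y : ZMod p × ZMod p | ¬ Disjoint (A.image (· - y.1)) (A.image (· - y.2))} ≤ #A ^ 2 * p := by
  have hsub : ({y : ZMod p × ZMod p |
      ¬ Disjoint (A.image (· - y.1)) (A.image (· - y.2))} : Finset (ZMod p × ZMod p)) ⊆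
      ((A ×ˢ A) ×ˢ (univ : Finset (ZMod p))).image fun z => (z.2, z.1.2 - z.1.1 + z.2) := by
    rintro ⟨y, y'⟩ hy
    simp only [mem_filter, mem_univ, true_and, Finset.not_disjoint_iff, mem_image] at hy
    obtain ⟨c, ⟨a, ha, rfl⟩, b, hb, hab⟩ := hy
    refine mem_image.2 ⟨((a, b), y), by simp [ha, hb], ?_⟩
    simp only [Prod.mk.injEq, true_and]
    linear_combination hab
  refine (card_le_card hsub).trans (card_image_le.trans ?_)
  simp [card_product, sq]

theorem abs_sum_paleyProd_fin_two_le (hp : Odd p) {A : Finset (ZMod p)} (hA : A.Nonempty)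
    {f : Fin 2 → (Fin 2 → ZMod p) → ℝ} (hf : ∀ i x, |f i x| ≤ 1)
    (hind : ∀ i x y, (∀ j, j ≠ i → x j = y j) → f i x = f i y) :
    |∑ x : Fin 2 → ZMod p, paleyProd A (∑ i, x i) * ∏ i, f i x| ≤ #A * √p * p := by
  have h := abs_sum_mul_mul_add_le (G := paleyProd A) (M := #A * √p)
    (f := fun u => f 1 ![u, 0]) (g := fun v => f 0 ![0, v])
    (fun ψ => by simpa [paleyProd] using norm_sum_quadraticChar_mul_addChar_le hp hA ψ)
    (fun _ => hf _ _) (fun _ => hf _ _)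
  rw [ZMod.card] at h
  convert h using 2
  rw [← Fintype.sum_prod_type', Fintype.sum_equiv (finTwoArrowEquiv (ZMod p))]
  intro x
  have h0 : f 0 x = f 0 ![0, x 1] := hind 0 _ _ fun j hj => by
    fin_cases j
    · exact absurd rfl hj
    · rfl
  have h1 : f 1 x = f 1 ![x 0, 0] := hind 1 _ _ fun j hj => by
    fin_cases j
    · rfl
    · exact absurd rfl hj
  simp [Fin.sum_univ_two, Fin.prod_univ_two, h0, h1]
  ring

/-- Correlation of `s ↦ ∏ χ(a - s)` along sums of `n + 1` variables with products of functions
each of which does not depend on one of the variables. -/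
theorem abs_sum_paleyProd_mul_prod_le (hp : Odd p) {n : ℕ} (hn : 1 ≤ n) :
    ∀ {A : Finset (ZMod p)}, A.Nonempty → ∀ {f : Fin (n + 1) → (Fin (n + 1) → ZMod p) → ℝ},
    (∀ i x, |f i x| ≤ 1) → (∀ i x y, (∀ j, j ≠ i → x j = y j) → f i x = f i y) →
    |∑ x : Fin (n + 1) → ZMod p, paleyProd A (∑ i, x i) * ∏ i, f i x|
      ≤ 3 * #A * ((p : ℝ) ^ (n + 1) * (p : ℝ) ^ (-(1 / 2 : ℝ) ^ n)) := by
  have hp1 : (1 : ℝ) ≤ p := by exact_mod_cast (Fact.out : p.Prime).one_le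
  have hp0 : (0 : ℝ) < p := by linarith
  induction n, hn using Nat.le_induction with
  | base =>
    intro A hA f hf hind
    refine (abs_sum_paleyProd_fin_two_le hp hA hf hind).trans ?_
    have : (p : ℝ) ^ (1 + 1) * (p : ℝ) ^ (-(1 / 2 : ℝ) ^ 1) = √p * p := by
      rw [Real.sqrt_eq_rpow, ← Real.rpow_natCast, ← Real.rpow_add hp0]
      conv_rhs => rw [← Real.rpow_add_one hp0.ne']
      congr 1
      norm_num
    rw [this]
    have : (0 : ℝ) ≤ #A * (√p * p) := by positivity
    linarith
  | succ n hn ih =>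
    intro A hA f hf hind
    set N : ℝ := (#A : ℝ) with hN
    have hN1 : 1 ≤ N := by rw [hN]; exact_mod_cast card_pos.2 hA
    set ε : ℝ := (p : ℝ) ^ (-(1 / 2 : ℝ) ^ n) with hε
    have hεp : 1 ≤ p * ε := by
      rw [hε]
      conv_rhs => rw [mul_comm, ← Real.rpow_add_one hp0.ne']
      refine Real.one_le_rpow hp1 ?_
      have : (1 / 2 : ℝ) ^ n ≤ 1 := pow_le_one₀ (by norm_num) (by norm_num)
      linarith
    set H : ZMod p → (Fin (n + 1) → ZMod p) → ℝ := fun y x =>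
      paleyProd A (y + ∑ i, x i) * ∏ i, f (Fin.succ i) (Fin.cons y x) with hH
    have hsplit : ∑ x : Fin (n + 1 + 1) → ZMod p, paleyProd A (∑ i, x i) * ∏ i, f i x
        = ∑ x : Fin (n + 1) → ZMod p, f 0 (Fin.cons 0 x) * ∑ y, H y x := by
      rw [← Fintype.sum_equiv (Fin.consEquiv fun _ => ZMod p)
        (fun z => f 0 (Fin.cons 0 z.2) * H z.1 z.2)]
      · rw [Fintype.sum_prod_type, Finset.sum_comm]
        simp_rw [Finset.mul_sum]
      · rintro ⟨y, x⟩
        have h0 : f 0 (Fin.cons y x : Fin (n + 1 + 1) → ZMod p) = f 0 (Fin.cons 0 x) :=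
          hind 0 _ _ fun j hj => by
            obtain ⟨i, rfl⟩ := Fin.exists_succ_eq.2 hj
            simp
        have he : (Fin.consEquiv fun _ : Fin (n + 1 + 1) => ZMod p) (y, x) = Fin.cons y x := rfl
        rw [he, Fin.sum_univ_succ, Fin.prod_univ_succ, h0]
        simp only [hH, Fin.cons_zero, Fin.cons_succ]
        ring
    have hcorr : ∀ y y' : ZMod p, ∑ x, H y x * H y' x ≤ (p : ℝ) ^ (n + 1) * (6 * N * ε +
        if Disjoint (A.image (· - y)) (A.image (· - y')) then 0 else 1) := by
      intro y y'
      have hprod : ∀ x, H y x * H y' x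
          = paleyProd (A.image (· - y)) (∑ i, x i) * paleyProd (A.image (· - y')) (∑ i, x i)
            * ∏ i, (f (Fin.succ i) (Fin.cons y x) * f (Fin.succ i) (Fin.cons y' x)) := by
        intro x
        rw [← paleyProd_add, ← paleyProd_add, Finset.prod_mul_distrib]
        simp only [hH]
        ring
      have hle : ∀ i x, |f (Fin.succ i) (Fin.cons y x) * f (Fin.succ i) (Fin.cons y' x)| ≤ 1 := by
        intro i x
        rw [abs_mul]
        exact mul_le_one₀ (hf _ _) (abs_nonneg _) (hf _ _)
      split_ifs with hdisj
      · have hcard : (#(A.image (· - y) ∪ A.image (· - y')) : ℝ) = 2 * N := by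
          rw [card_union_of_disjoint hdisj, card_image_of_injective _ sub_left_injective,
            card_image_of_injective _ sub_left_injective, hN]
          push_cast
          ring
        have h1 := ih (A := A.image (· - y) ∪ A.image (· - y'))
          ((hA.image _).mono subset_union_left)
          (f := fun i x => f (Fin.succ i) (Fin.cons y x) * f (Fin.succ i) (Fin.cons y' x)) hle
          (by
            intro i x x' hx
            have h : ∀ z, f (Fin.succ i) (Fin.cons z x) = f (Fin.succ i) (Fin.cons z x') :=
              fun z => hind _ _ _ fun j hj => by
                refine Fin.cases ?_ (fun j hj => ?_) j hj
                · simp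
                · simpa using hx j fun h => hj (congrArg _ h)
            simp only [h])
        rw [hcard] at h1
        simp only [hprod, paleyProd_mul_of_disjoint hdisj]
        refine (le_abs_self _).trans (h1.trans (le_of_eq ?_))
        ring
      · have h1 : ∀ x ∈ (univ : Finset (Fin (n + 1) → ZMod p)), H y x * H y' x ≤ 1 := by
          intro x _
          rw [hprod]
          refine (le_abs_self _).trans ?_
          rw [abs_mul, abs_mul, Finset.abs_prod]
          refine mul_le_one₀ (mul_le_one₀ (abs_paleyProd_le_one _ _) (abs_nonneg _)
            (abs_paleyProd_le_one _ _)) (prod_nonneg fun _ _ => abs_nonneg _)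
            (prod_le_one (fun _ _ => abs_nonneg _) fun i _ => hle i x)
        refine (Finset.sum_le_card_nsmul _ _ 1 h1).trans ?_
        have hc : (#(univ : Finset (Fin (n + 1) → ZMod p)) : ℝ) = (p : ℝ) ^ (n + 1) := by
          simp [ZMod.card]
        rw [nsmul_eq_mul, hc, mul_one]
        refine le_mul_of_one_le_right (by positivity) ?_
        have : 0 ≤ 6 * N * ε := by positivity
        linarith
    have hbad : ∑ y : ZMod p, ∑ y' : ZMod p,
        (if Disjoint (A.image (· - y)) (A.image (· - y')) then (0 : ℝ) else 1) ≤ N ^ 2 * p := by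
      rw [← Fintype.sum_prod_type' (f := fun y y' =>
        if Disjoint (A.image (· - y)) (A.image (· - y')) then (0 : ℝ) else 1)]
      have h1 := card_not_disjoint_translates_le A
      rw [Finset.card_filter] at h1
      have h2 : ((∑ y : ZMod p × ZMod p,
          if ¬ Disjoint (A.image (· - y.1)) (A.image (· - y.2)) then 1 else 0 : ℕ) : ℝ)
          ≤ ((#A ^ 2 * p : ℕ) : ℝ) := by exact_mod_cast h1
      push_cast at h2
      refine le_trans (le_of_eq ?_) h2
      refine Finset.sum_congr rfl fun y _ => ?_
      split_ifs <;> simp_all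
    have hsq : (∑ x : Fin (n + 1) → ZMod p, f 0 (Fin.cons 0 x) * ∑ y, H y x) ^ 2
        ≤ (3 * N * ((p : ℝ) ^ (n + 1 + 1) * (p : ℝ) ^ (-(1 / 2 : ℝ) ^ (n + 1)))) ^ 2 := by
      refine (Finset.sum_mul_sq_le_sq_mul_sq _ _ _).trans ?_
      have h1 : ∑ x : Fin (n + 1) → ZMod p, f 0 (Fin.cons 0 x) ^ 2 ≤ (p : ℝ) ^ (n + 1) := by
        refine (Finset.sum_le_card_nsmul _ _ 1 fun x _ => ?_).trans ?_
        · rw [sq_le_one_iff_abs_le_one]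
          exact hf _ _
        · simp [ZMod.card]
      have h2 : ∑ x, (∑ y, H y x) ^ 2
          ≤ (p : ℝ) ^ (n + 1) * (p ^ 2 * (6 * N * ε) + N ^ 2 * p) := by
        have h3 : ∑ x, (∑ y, H y x) ^ 2 = ∑ y, ∑ y', ∑ x, H y x * H y' x := by
          simp_rw [sq, Finset.sum_mul_sum]
          rw [Finset.sum_comm]
          refine Finset.sum_congr rfl fun y _ => ?_
          rw [Finset.sum_comm]
        rw [h3]
        refine (Finset.sum_le_sum fun y _ => Finset.sum_le_sum fun y' _ => hcorr y y').trans ?_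
        simp_rw [← Finset.mul_sum, Finset.sum_add_distrib]
        gcongr
        simp [ZMod.card]
        linarith
      calc _ ≤ (p : ℝ) ^ (n + 1) * ((p : ℝ) ^ (n + 1) * (p ^ 2 * (6 * N * ε) + N ^ 2 * p)) := by
            gcongr
        _ ≤ (p : ℝ) ^ (n + 1) * ((p : ℝ) ^ (n + 1) * (p ^ 2 * (9 * N ^ 2 * ε))) := by
            gcongr
            have e1 : N ^ 2 * p ≤ N ^ 2 * p * (p * ε) := le_mul_of_one_le_right (by positivity) hεp
            have e2 : p ^ 2 * (6 * N * ε) ≤ p ^ 2 * (8 * N ^ 2 * ε) := by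
              gcongr ?_ * (?_ * _)
              nlinarith
            linarith
        _ = _ := by
            rw [mul_pow, mul_pow, mul_pow, rpow_neg_half_pow_succ_sq, ← hε]
            ring
    rw [hsplit]
    exact abs_le_of_sq_le_sq hsq (by positivity)

end

theorem card_injective_image_eq {α : Type*} [Fintype α] [DecidableEq α] {n : ℕ} {σ : Finset α}
    (hσ : #σ = n) :
    #{x : Fin n → α | Function.Injective x ∧ univ.image x = σ} = n.factorial := by
  have e : Fin n ≃ σ := (σ.equivFinOfCardEq hσ).symm
  have hcard : #(univ : Finset (Fin n ≃ σ)) = n.factorial := by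
    rw [card_univ, Fintype.card_equiv e, Fintype.card_fin]
  rw [← hcard]
  symm
  refine Finset.card_bij (fun (e : Fin n ≃ σ) _ => fun i => (e i : α)) ?_ ?_ ?_
  · intro e _
    rw [mem_filter]
    refine ⟨mem_univ _, Subtype.val_injective.comp e.injective, ?_⟩
    ext a
    rw [mem_image]
    constructor
    · rintro ⟨i, -, rfl⟩
      exact (e i).2
    · intro ha
      exact ⟨e.symm ⟨a, ha⟩, mem_univ _, by simp⟩
  · intro e _ e' _ h
    ext i
    exact congrFun h i
  · intro x hx
    rw [mem_filter] at hx
    obtain ⟨-, hinj, himg⟩ := hx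
    have hmem : ∀ i, x i ∈ σ := fun i => himg ▸ mem_image_of_mem x (mem_univ i)
    refine ⟨Equiv.ofBijective (fun i => ⟨x i, hmem i⟩) ⟨?_, ?_⟩, mem_univ _, ?_⟩
    · intro i j h
      exact hinj (congrArg Subtype.val h)
    · rintro ⟨a, ha⟩
      rw [← himg, mem_image] at ha
      obtain ⟨i, -, rfl⟩ := ha
      exact ⟨i, rfl⟩
    · rfl

theorem sum_injective_image_eq {α : Type*} [Fintype α] [DecidableEq α] (n : ℕ)
    (h : Finset α → ℝ) :
    ∑ x : Fin n → α with Function.Injective x, h (univ.image x)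
      = n.factorial * ∑ σ ∈ powersetCard n univ, h σ := by
  have hmaps : ∀ x ∈ ({x : Fin n → α | Function.Injective x} : Finset (Fin n → α)),
      univ.image x ∈ powersetCard n (univ : Finset α) := by
    intro x hx
    rw [mem_filter] at hx
    rw [mem_powersetCard]
    exact ⟨subset_univ _, by rw [card_image_of_injective _ hx.2, card_univ, Fintype.card_fin]⟩
  rw [← Finset.sum_fiberwise_of_maps_to hmaps, Finset.mul_sum]
  refine Finset.sum_congr rfl fun σ hσ => ?_
  rw [Finset.filter_filter, Finset.sum_congr rfl (g := fun _ => h σ), Finset.sum_const,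
    card_injective_image_eq (mem_powersetCard.1 hσ).2, nsmul_eq_mul]
  intro x hx
  rw [(mem_filter.1 hx).2.2]

theorem pow_succ_le_mul_descFactorial_add (p n : ℕ) :
    (p : ℝ) * p ^ n ≤ p * p.descFactorial n + n.choose 2 * p ^ n := by
  induction n with
  | zero => simp
  | succ n ih =>
    have h1 : (p.descFactorial n : ℝ) ≤ p ^ n := by exact_mod_cast Nat.descFactorial_le_pow p n
    have h2 : (p : ℝ) - n ≤ ((p - n : ℕ) : ℝ) := by
      rw [sub_le_iff_le_add]
      have : p ≤ p - n + n := by omega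
      exact_mod_cast this
    have h3 : ((n + 1).choose 2 : ℝ) = n + n.choose 2 := by
      rw [Nat.choose_succ_succ' n 1]
      push_cast
      simp
    rw [Nat.descFactorial_succ, h3, pow_succ]
    push_cast
    have hp : (0 : ℝ) ≤ p := Nat.cast_nonneg p
    have hn : (0 : ℝ) ≤ n := Nat.cast_nonneg n
    have e1 : ((p : ℝ) - n) * p.descFactorial n ≤ ((p - n : ℕ) : ℝ) * p.descFactorial n := by
      gcongr
    have e2 := mul_le_mul_of_nonneg_left e1 hp
    have e3 := mul_le_mul_of_nonneg_left ih hp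
    have e4 := mul_le_mul_of_nonneg_left h1 (mul_nonneg hp hn)
    linarith

theorem card_not_injective_mul_le {p : ℕ} [Fact p.Prime] (n : ℕ) :
    (p : ℝ) * #{x : Fin n → ZMod p | ¬ Function.Injective x} ≤ n.choose 2 * p ^ n := by
  have h1 := Finset.card_filter_add_card_filter_not (s := (univ : Finset (Fin n → ZMod p)))
    (fun x => Function.Injective x)
  have h2 := sum_injective_image_eq (α := ZMod p) n fun _ => 1
  rw [Finset.sum_const, Finset.sum_const, card_powersetCard, card_univ, ZMod.card, nsmul_eq_mul,
    nsmul_eq_mul, mul_one, mul_one] at h2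
  have h3 : (#{x : Fin n → ZMod p | Function.Injective x} : ℝ) = p.descFactorial n := by
    rw [h2, Nat.descFactorial_eq_factorial_mul_choose]
    push_cast
    rfl
  have h4 : ((#{x : Fin n → ZMod p | Function.Injective x} : ℕ) : ℝ)
      + (#{x : Fin n → ZMod p | ¬ Function.Injective x} : ℕ) = (p : ℝ) ^ n := by
    rw [← Nat.cast_add, h1, card_univ, Fintype.card_fun, ZMod.card, Fintype.card_fin]
    push_cast
    rfl
  have h5 := pow_succ_le_mul_descFactorial_add p n
  rw [← h4, h3] at h5
  rw [← h4, h3]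
  linarith

theorem abs_sum_quadraticChar_mul_prod_erase_le {p : ℕ} [Fact p.Prime] (hp : Odd p) {k : ℕ}
    (hk : 1 ≤ k) {f : Finset (ZMod p) → ℝ} (hf : ∀ τ, |f τ| ≤ 1) :
    ((k + 1).factorial : ℝ) * |∑ σ ∈ powersetCard (k + 1) (univ : Finset (ZMod p)),
        ((quadraticChar (ZMod p) (∑ x ∈ σ, x) : ℤ) : ℝ) * ∏ x ∈ σ, f (σ.erase x)|
      ≤ (3 + (k + 1).choose 2) * ((p : ℝ) ^ (k + 1) * (p : ℝ) ^ (-(1 / 2 : ℝ) ^ k)) := by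
  classical
  have hp1 : (1 : ℝ) ≤ p := by exact_mod_cast (Fact.out : p.Prime).one_le
  have hp0 : (0 : ℝ) < p := by linarith
  set ε : ℝ := (p : ℝ) ^ (-(1 / 2 : ℝ) ^ k) with hε
  have hεp : 1 ≤ p * ε := by
    rw [hε]
    conv_rhs => rw [mul_comm, ← Real.rpow_add_one hp0.ne']
    refine Real.one_le_rpow hp1 ?_
    have : (1 / 2 : ℝ) ^ k ≤ 1 := pow_le_one₀ (by norm_num) (by norm_num)
    linarith
  set g : Fin (k + 1) → (Fin (k + 1) → ZMod p) → ℝ := fun i x => f ((univ.erase i).image x) with hg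
  have hall := abs_sum_paleyProd_mul_prod_le hp hk (A := {0}) (singleton_nonempty _) (f := g)
    (fun _ _ => hf _) (by
      intro i x y hxy
      simp only [hg]
      congr 1
      exact image_congr fun j hj => hxy j (by simpa using hj))
  rw [card_singleton, Nat.cast_one, mul_one] at hall
  have hχ : ∀ s : ZMod p, paleyProd {0} s
      = ((quadraticChar (ZMod p) (-1) : ℤ) : ℝ) * ((quadraticChar (ZMod p) s : ℤ) : ℝ) := by
    intro s
    rw [paleyProd, prod_singleton, zero_sub, ← neg_one_mul, map_mul, Int.cast_mul]
  set W : (Fin (k + 1) → ZMod p) → ℝ := fun x => paleyProd {0} (∑ i, x i) * ∏ i, g i x with hW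
  have hinj : ∑ x with Function.Injective x, W x = ((quadraticChar (ZMod p) (-1) : ℤ) : ℝ) *
      ((k + 1).factorial * ∑ σ ∈ powersetCard (k + 1) (univ : Finset (ZMod p)),
        ((quadraticChar (ZMod p) (∑ x ∈ σ, x) : ℤ) : ℝ) * ∏ x ∈ σ, f (σ.erase x)) := by
    rw [← sum_injective_image_eq, Finset.mul_sum]
    refine Finset.sum_congr rfl fun x hx => ?_
    have hx' := (mem_filter.1 hx).2
    rw [Finset.sum_image hx'.injOn, Finset.prod_image hx'.injOn, ← mul_assoc, ← hχ]
    simp only [hW, hg, image_erase hx']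
  have hnon : |∑ x with ¬ Function.Injective x, W x|
      ≤ (k + 1).choose 2 * ((p : ℝ) ^ (k + 1) * ε) := by
    have h1 : |∑ x with ¬ Function.Injective x, W x|
        ≤ #{x : Fin (k + 1) → ZMod p | ¬ Function.Injective x} := by
      refine (abs_sum_le_sum_abs _ _).trans ((Finset.sum_le_card_nsmul _ _ 1 fun x _ => ?_).trans
        (by simp))
      simp only [hW]
      rw [abs_mul, Finset.abs_prod]
      exact mul_le_one₀ (abs_paleyProd_le_one _ _) (prod_nonneg fun _ _ => abs_nonneg _)
        (prod_le_one (fun _ _ => abs_nonneg _) fun i _ => hf _)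
    have h2 := card_not_injective_mul_le (p := p) (k + 1)
    refine h1.trans (le_of_mul_le_mul_left (h2.trans ?_) hp0)
    have h3 : (0 : ℝ) ≤ (k + 1).choose 2 * (p : ℝ) ^ (k + 1) := by positivity
    nlinarith
  have hsplit := Finset.sum_filter_add_sum_filter_not (univ : Finset (Fin (k + 1) → ZMod p))
    (fun x => Function.Injective x) W
  have habs : |∑ x with Function.Injective x, W x| ≤ (3 + (k + 1).choose 2) *
      ((p : ℝ) ^ (k + 1) * ε) := by
    rw [eq_sub_of_add_eq hsplit, add_mul]
    exact (abs_sub _ _).trans (add_le_add hall hnon)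
  have h1 : |((quadraticChar (ZMod p) (-1) : ℤ) : ℝ)| = 1 := by
    rcases quadraticChar_dichotomy (neg_ne_zero.2 (one_ne_zero (α := ZMod p))) with h | h <;>
      simp [h]
  rwa [hinj, abs_mul, h1, one_mul, abs_mul, Nat.abs_cast] at habs

theorem mul_card_powersetCard_sum_eq_zero {p : ℕ} [Fact p.Prime] {n : ℕ} (hn0 : n ≠ 0)
    (hn : n < p) :
    p * #{σ ∈ powersetCard n (univ : Finset (ZMod p)) | ∑ x ∈ σ, x = 0} = p.choose n := by
  have hnF : (n : ZMod p) ≠ 0 := by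
    rw [Ne, ZMod.natCast_eq_zero_iff]
    exact Nat.not_dvd_of_pos_of_lt (Nat.pos_of_ne_zero hn0) hn
  have hsum : ∀ (σ : Finset (ZMod p)) (b : ZMod p), ∑ x ∈ σ.image (· + b), x
      = ∑ x ∈ σ, x + #σ * b := by
    intro σ b
    rw [Finset.sum_image (add_left_injective b).injOn, Finset.sum_add_distrib]
    simp
  have hfib : ∀ c : ZMod p, #{σ ∈ powersetCard n (univ : Finset (ZMod p)) | ∑ x ∈ σ, x = c}
      = #{σ ∈ powersetCard n (univ : Finset (ZMod p)) | ∑ x ∈ σ, x = 0} := by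
    intro c
    refine Finset.card_nbij' (fun σ => σ.image (· + -(c / n))) (fun σ => σ.image (· + c / n))
      ?_ ?_ ?_ ?_
    · intro σ hσ
      simp only [coe_filter, mem_powersetCard, Set.mem_ofPred_eq, subset_univ, true_and] at hσ ⊢
      rw [card_image_of_injective _ (add_left_injective _), hsum, hσ.1, hσ.2]
      exact ⟨rfl, by field_simp; ring⟩
    · intro σ hσ
      simp only [coe_filter, mem_powersetCard, Set.mem_ofPred_eq, subset_univ, true_and] at hσ ⊢
      rw [card_image_of_injective _ (add_left_injective _), hsum, hσ.1, hσ.2]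
      exact ⟨rfl, by field_simp; ring⟩
    · intro σ _
      simp only [image_image, Function.comp_def, neg_add_cancel_right, image_id']
    · intro σ _
      simp only [image_image, Function.comp_def, add_neg_cancel_right, image_id']
  have h1 := Finset.card_eq_sum_card_fiberwise
    (s := powersetCard n (univ : Finset (ZMod p))) (t := univ) (f := fun σ => ∑ x ∈ σ, x)
    (fun _ _ => mem_univ _)
  rw [Finset.sum_congr rfl fun c _ => hfib c, Finset.sum_const, card_powersetCard, card_univ,
    ZMod.card, smul_eq_mul] at h1
  exact h1.symm

/-- The nontrivial character of `ZMod 2`, with real values. -/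
def parity (a : ZMod 2) : ℝ := if a = 0 then 1 else -1

theorem parity_add (a b : ZMod 2) : parity (a + b) = parity a * parity b := by
  have h : ∀ c : ZMod 2, c = 0 ∨ c = 1 := by decide
  have h11 : (1 + 1 : ZMod 2) = 0 := by decide
  rcases h a with rfl | rfl <;> rcases h b with rfl | rfl <;> simp [parity, h11]

theorem parity_sum {ι : Type*} (s : Finset ι) (f : ι → ZMod 2) :
    parity (∑ i ∈ s, f i) = ∏ i ∈ s, parity (f i) := by
  classical
  induction s using Finset.induction_on with
  | empty => simp [parity]
  | insert i s hi ih => rw [Finset.sum_insert hi, Finset.prod_insert hi, parity_add, ih]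

theorem abs_parity (a : ZMod 2) : |parity a| = 1 := by
  unfold parity
  split_ifs <;> simp

section FullSimplex

variable {V : Type*} [Fintype V]

theorem faces_nonempty_subsets (k : ℕ) :
    faces (Finset.univ.powerset.filter fun σ : Finset V => σ.Nonempty) k
      = powersetCard (k + 1) univ := by
  ext σ
  simp only [faces, mem_filter, mem_powerset, mem_powersetCard, and_assoc]
  refine ⟨fun h => ⟨h.1, h.2.2⟩, fun h => ⟨h.1, ?_, h.2⟩⟩
  exact card_pos.1 (by omega)

theorem cnorm_nonempty_subsets (k : ℕ) (φ : Finset V → ZMod 2) :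
    (cnorm (Finset.univ.powerset.filter fun σ : Finset V => σ.Nonempty) k φ : ℝ)
      = ∑ σ ∈ powersetCard (k + 1) univ, (1 - parity (φ σ)) / 2 := by
  rw [cnorm, csupp, faces_nonempty_subsets, Finset.card_filter]
  push_cast
  refine Finset.sum_congr rfl fun σ _ => ?_
  by_cases h : φ σ = 0
  · simp [h, parity]
  · simp only [h, parity, ne_eq, not_false_eq_true, if_true, if_false]
    norm_num

variable [DecidableEq V]

theorem cob_nonempty_subsets (k : ℕ) (ψ : Finset V → ZMod 2) {σ : Finset V} (hσ : #σ = k + 2) :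
    cob (Finset.univ.powerset.filter fun σ : Finset V => σ.Nonempty) k ψ σ
      = ∑ x ∈ σ, ψ (σ.erase x) := by
  rw [cob, faces_nonempty_subsets]
  symm
  refine Finset.sum_nbij (fun x => σ.erase x) ?_ (Finset.erase_injOn σ) ?_ fun _ _ => rfl
  · intro x hx
    rw [mem_filter, mem_powersetCard, card_erase_of_mem hx, hσ]
    exact ⟨⟨subset_univ _, rfl⟩, erase_subset _ _⟩
  · intro τ hτ
    rw [mem_coe, mem_filter, mem_powersetCard] at hτ
    obtain ⟨x, hx⟩ := Finset.card_eq_one.1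
      (show #(σ \ τ) = 1 by rw [card_sdiff_of_subset hτ.2, hσ, hτ.1.2]; omega)
    have hxm : x ∈ σ \ τ := by rw [hx]; exact mem_singleton_self x
    refine ⟨x, mem_coe.2 (mem_sdiff.1 hxm).1, ?_⟩
    change σ.erase x = τ
    rw [← sdiff_singleton_eq_erase, ← hx, Finset.sdiff_sdiff_eq_self hτ.2]

end FullSimplex

theorem parity_paley {p : ℕ} [Fact p.Prime] (s : ZMod p) :
    parity (if legendreSym p (s.val : ℤ) = 1 then 1 else 0)
      = (if s = 0 then 1 else 0) - ((quadraticChar (ZMod p) s : ℤ) : ℝ) := by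
  have hs : legendreSym p (s.val : ℤ) = quadraticChar (ZMod p) s := by
    simp [legendreSym]
  rw [hs]
  by_cases h0 : s = 0
  · simp [h0, parity]
  · rcases quadraticChar_dichotomy h0 with h | h <;> simp [h, h0, parity]

theorem three_add_choose_two_le (k : ℕ) : 3 + (k + 1).choose 2 ≤ 2 ^ (k + 2) := by
  induction k with
  | zero => decide
  | succ k ih =>
    rw [Nat.choose_succ_succ' (k + 1) 1, Nat.choose_one_right, one_add_one_eq_two, pow_succ]
    have := Nat.lt_two_pow_self (n := k + 2)
    omega

theorem rpow_succ_sub_half_pow {x : ℝ} (hx : 0 < x) (k : ℕ) :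
    x ^ (((k : ℝ) + 1) - (1 / 2 : ℝ) ^ k) = x ^ (k + 1) * x ^ (-(1 / 2 : ℝ) ^ k) := by
  rw [← Real.rpow_natCast x (k + 1), ← Real.rpow_add hx, sub_eq_add_neg, Nat.cast_succ]

theorem one_le_two_pow_div_factorial_mul_rpow {p k : ℕ} (hpk : p = k + 1) :
    1 ≤ (2 ^ (k + 1) : ℝ) / ((k + 1).factorial : ℝ) *
      (p : ℝ) ^ (((k : ℝ) + 1) - (1 / 2 : ℝ) ^ k) := by
  have hp1 : (1 : ℝ) ≤ p := by rw [hpk]; push_cast; linarith [Nat.cast_nonneg (α := ℝ) k]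
  have hfact : ((k + 1).factorial : ℝ) ≤ 2 ^ (k + 1) * (p : ℝ) ^ k := by
    have h : (k + 1).factorial ≤ 2 ^ (k + 1) * p ^ k := by
      calc (k + 1).factorial ≤ (k + 1) ^ (k + 1) := Nat.factorial_le_pow _
        _ = (k + 1) * p ^ k := by rw [hpk, pow_succ, mul_comm]
        _ ≤ 2 ^ (k + 1) * p ^ k := Nat.mul_le_mul_right _ Nat.lt_two_pow_self.le
    exact_mod_cast h
  have hpow : (p : ℝ) ^ k ≤ (p : ℝ) ^ (((k : ℝ) + 1) - (1 / 2 : ℝ) ^ k) := by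
    rw [← Real.rpow_natCast]
    refine Real.rpow_le_rpow_of_exponent_le hp1 ?_
    have : (1 / 2 : ℝ) ^ k ≤ 1 := pow_le_one₀ (by norm_num) (by norm_num)
    linarith
  rw [div_mul_eq_mul_div, one_le_div (by positivity)]
  exact hfact.trans (by gcongr)

/-- **Cosystolic norm of the Paley cochain**: for an odd prime `p` and `1 ≤ k < p`, the
Paley `k`-cochain `φ_k` on the full simplex on `F_p` (the indicator of the `k`-faces whose
vertex sum is a nonzero quadratic residue) satisfies
`‖φ_k‖_csy ≥ ((p-1)/(2p)) C(p, k+1) - (2^{k+1}/(k+1)!) p^{k+1-2^{-k}}`. -/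
theorem paley_cochain_cosystole {p : ℕ} [Fact p.Prime] (hodd : Odd p)
    (k : ℕ) (hk1 : 1 ≤ k) (hkp : k < p)
    (X : Finset (Finset (ZMod p)))
    (hXdef : X = Finset.univ.powerset.filter fun σ : Finset (ZMod p) => σ.Nonempty)
    (φ : Finset (ZMod p) → ZMod 2)
    (hφ : ∀ σ : Finset (ZMod p),
      φ σ = if legendreSym p ((∑ x ∈ σ, x).val : ℤ) = 1 then 1 else 0) :
    ((p : ℝ) - 1) / (2 * (p : ℝ)) * (Nat.choose p (k + 1) : ℝ) -
        (2 ^ (k + 1) : ℝ) / ((Nat.factorial (k + 1)) : ℝ) *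
          (p : ℝ) ^ (((k : ℝ) + 1) - (1 / 2 : ℝ) ^ k) ≤
      (cosys X k φ : ℝ) := by
  have hp1 : (1 : ℝ) ≤ p := by exact_mod_cast (Fact.out : p.Prime).one_le
  have hp0 : (0 : ℝ) < p := by linarith
  rcases eq_or_lt_of_le (Nat.succ_le_of_lt hkp) with hpk | hlt
  · have h1 := one_le_two_pow_div_factorial_mul_rpow hpk.symm
    have h2 : ((p : ℝ) - 1) / (2 * p) ≤ 1 := by
      rw [div_le_one (by positivity)]
      linarith
    rw [show k + 1 = p from hpk, Nat.choose_self, Nat.cast_one, mul_one]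
    rw [show k + 1 = p from hpk] at h1
    have h3 : (0 : ℝ) ≤ cosys X k φ := Nat.cast_nonneg _
    linarith
  obtain ⟨ψ, hψ⟩ : ∃ ψ : Finset (ZMod p) → ZMod 2,
      cosys X k φ = cnorm X k fun τ => φ τ + cob X (k - 1) ψ τ := by
    rw [cosys, if_neg (by omega)]
    exact Nat.sInf_mem (s := {m | ∃ ψ : Finset (ZMod p) → ZMod 2,
      m = cnorm X k fun τ => φ τ + cob X (k - 1) ψ τ}) ⟨_, 0, rfl⟩
  set T : Finset (ZMod p) → ℝ := fun σ => ∏ x ∈ σ, parity (ψ (σ.erase x)) with hT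
  have hT1 : ∀ σ, |T σ| = 1 := fun σ => by
    rw [hT, Finset.abs_prod]
    exact Finset.prod_eq_one fun x _ => abs_parity _
  have hsign : ∀ σ ∈ powersetCard (k + 1) (univ : Finset (ZMod p)),
      (1 - parity (φ σ + cob X (k - 1) ψ σ)) / 2
        = (1 + ((quadraticChar (ZMod p) (∑ x ∈ σ, x) : ℤ) : ℝ) * T σ
            - if ∑ x ∈ σ, x = 0 then T σ else 0) / 2 := by
    intro σ hσ
    rw [parity_add, hXdef, cob_nonempty_subsets (k - 1) ψ
      (by rw [(mem_powersetCard.1 hσ).2]; omega), parity_sum, hφ, parity_paley]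
    split_ifs <;> ring
  have hnorm : (cosys X k φ : ℝ) = ((p.choose (k + 1) : ℝ)
      + ∑ σ ∈ powersetCard (k + 1) (univ : Finset (ZMod p)),
          ((quadraticChar (ZMod p) (∑ x ∈ σ, x) : ℤ) : ℝ) * T σ
      - ∑ σ ∈ powersetCard (k + 1) (univ : Finset (ZMod p)) with ∑ x ∈ σ, x = 0, T σ) / 2 := by
    rw [hψ]
    conv_lhs => rw [hXdef]
    rw [cnorm_nonempty_subsets, ← hXdef, Finset.sum_congr rfl hsign, ← Finset.sum_div,
      Finset.sum_sub_distrib, Finset.sum_add_distrib, Finset.sum_filter, Finset.sum_const,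
      card_powersetCard, card_univ, ZMod.card, nsmul_eq_mul, mul_one]
  have hzero : ∑ σ ∈ powersetCard (k + 1) (univ : Finset (ZMod p)) with ∑ x ∈ σ, x = 0, T σ
      ≤ (p.choose (k + 1) : ℝ) / p := by
    rw [le_div_iff₀ hp0, ← mul_card_powersetCard_sum_eq_zero (Nat.succ_ne_zero k) hlt, mul_comm]
    push_cast
    gcongr
    refine (Finset.sum_le_card_nsmul _ _ 1 fun σ _ => ?_).trans (by simp)
    exact (le_abs_self _).trans (hT1 σ).le
  have hcorr : -(2 * ((2 ^ (k + 1) : ℝ) / ((k + 1).factorial : ℝ) *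
        (p : ℝ) ^ (((k : ℝ) + 1) - (1 / 2 : ℝ) ^ k)))
      ≤ ∑ σ ∈ powersetCard (k + 1) (univ : Finset (ZMod p)),
          ((quadraticChar (ZMod p) (∑ x ∈ σ, x) : ℤ) : ℝ) * T σ := by
    refine (neg_le_neg ?_).trans (neg_abs_le _)
    have h1 := abs_sum_quadraticChar_mul_prod_erase_le hodd hk1
      (f := fun τ => parity (ψ τ)) (fun τ => (abs_parity _).le)
    rw [← rpow_succ_sub_half_pow hp0] at h1
    have h2 : (3 + ((k + 1).choose 2 : ℕ) : ℝ) ≤ 2 ^ (k + 2) := by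
      exact_mod_cast three_add_choose_two_le k
    have hf : (0 : ℝ) < (k + 1).factorial := by exact_mod_cast Nat.factorial_pos _
    refine le_of_mul_le_mul_left (h1.trans ((mul_le_mul_of_nonneg_right h2
      (by positivity)).trans (le_of_eq ?_))) hf
    field_simp
    ring
  rw [hnorm]
  have hmain : ((p : ℝ) - 1) / (2 * (p : ℝ)) * (p.choose (k + 1) : ℝ)
      = (p.choose (k + 1) - (p.choose (k + 1) : ℝ) / p) / 2 := by
    field_simp
  rw [hmain]
  linarith
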